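/- arXiv:2511.03358 — 6 statements merged into one kernel-verified Lean document; each statement's English description precedes it below -/
import Mathlib

section
/- Let a ≤ 0, ν ∈ [0,1), σa > 0 and σm > 0 satisfy a + (1−ν)·σm² > 0. Then there exists θ_c > 0 such that for every θ > θ_c the equation F(ν,σa,σm,a,θ)[μ] = 0 has exactly three solutions μ ∈ ℝ; that is, multiplicative noise under a non-Itô interpretation induces a stable phase even when the potential x⁴/4 − a·x²/2 is convex. -/
open MeasureTheory Real Set Filter

/-- Unnormalised stationary density ρ0[μ](x) of the McKean–Vlasov SDE
`dX = (aX − X³ − θ(X − m₁))dt + σa dB¹ + σm X ∘_ν dB²`. -/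
noncomputable def rho0 (ν σa σm a θ μ x : ℝ) : ℝ :=
  Real.exp (((a - θ - ν * σm ^ 2 + σa ^ 2 / σm ^ 2) / σm ^ 2) *
      Real.log (1 + (σm ^ 2 / σa ^ 2) * x ^ 2) +
    (2 * θ * μ / (σa * σm)) * Real.arctan (σm * x / σa) - x ^ 2 / σm ^ 2)

/-- Normalisation constant Z[μ] = ∫ ρ0[μ]. -/
noncomputable def Z (ν σa σm a θ μ : ℝ) : ℝ := ∫ x : ℝ, rho0 ν σa σm a θ μ x

/-- Self-consistency function F(ν,σa,σm,a,θ)[μ] = (∫ (x−μ)·ρ0[μ]) / Z[μ]. -/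
noncomputable def F (ν σa σm a θ μ : ℝ) : ℝ :=
  (∫ x : ℝ, (x - μ) * rho0 ν σa σm a θ μ x) / Z ν σa σm a θ μ

/-- F'_μ[0] : the derivative at μ = 0 of μ ↦ F(ν,σa,σm,a,θ)[μ]. -/
noncomputable def Fmu' (ν σa σm a θ : ℝ) : ℝ := deriv (fun μ => F ν σa σm a θ μ) 0


/-- The even weight. -/
noncomputable def wt (A s c x : ℝ) : ℝ := exp (A * log (1 + c ^ 2 * x ^ 2) - s * x ^ 2)

/-- Reduced self-consistency integral. -/
noncomputable def Gf (A s c b h : ℝ) : ℝ :=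
  ∫ x : ℝ, (b * x - x ^ 3) * sinh (h * arctan (c * x)) * wt A s c x

lemma wt_pos (A s c x : ℝ) : 0 < wt A s c x := exp_pos _

lemma wt_cont (A s c : ℝ) : Continuous (wt A s c) := by
  unfold wt
  have : Continuous fun x : ℝ => log (1 + c ^ 2 * x ^ 2) :=
    Continuous.log (by fun_prop) (fun x => by positivity)
  fun_prop

lemma wt_neg (A s c x : ℝ) : wt A s c (-x) = wt A s c x := by
  unfold wt; simp

lemma log_bound (u ε : ℝ) (hu : 0 ≤ u) (hε : 0 < ε) : log (1 + u) ≤ ε * u + (ε - log ε) := by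
  have h1 : log (ε * (1 + u)) = log ε + log (1 + u) := log_mul hε.ne' (by positivity)
  have h2 := log_le_sub_one_of_pos (show 0 < ε * (1 + u) by positivity)
  linarith

lemma wt_bound (A s c : ℝ) (hs : 0 < s) :
    ∃ C, 0 < C ∧ ∀ x, wt A s c x ≤ C * exp (-(s / 2) * x ^ 2) := by
  set ε : ℝ := s / (2 * (|A| * c ^ 2 + 1)) with hε
  have hε0 : 0 < ε := by positivity
  refine ⟨exp (|A| * (ε - log ε)), exp_pos _, fun x => ?_⟩
  rw [← exp_add, wt]
  apply exp_le_exp.2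
  have h1 := log_bound (c ^ 2 * x ^ 2) ε (by positivity) hε0
  have h0 : 0 ≤ log (1 + c ^ 2 * x ^ 2) := log_nonneg (by nlinarith [sq_nonneg (c * x)])
  have h2 : A * log (1 + c ^ 2 * x ^ 2) ≤ |A| * log (1 + c ^ 2 * x ^ 2) :=
    mul_le_mul_of_nonneg_right (le_abs_self A) h0
  have h3 := mul_le_mul_of_nonneg_left h1 (abs_nonneg A)
  have h4 : |A| * (ε * (c ^ 2 * x ^ 2)) ≤ s / 2 * x ^ 2 := by
    have : |A| * (ε * (c ^ 2 * x ^ 2)) = (|A| * c ^ 2 * ε) * x ^ 2 := by ring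
    rw [this]
    apply mul_le_mul_of_nonneg_right _ (sq_nonneg x)
    have h5 : (|A| * c ^ 2 + 1) * ε = s / 2 := by rw [hε]; field_simp
    nlinarith
  linarith

lemma int_basic (A s c : ℝ) (hs : 0 < s) (n : ℕ) : Integrable fun x : ℝ => x ^ n * wt A s c x := by
  obtain ⟨C, hC, hb⟩ := wt_bound A s c hs
  have h1 := integrable_rpow_mul_exp_neg_mul_sq (b := s / 2) (by positivity) (s := (n : ℝ))
    (by have : (0 : ℝ) ≤ n := n.cast_nonneg
        linarith)
  simp only [rpow_natCast] at h1
  refine Integrable.mono' (h1.norm.const_mul C) ?_ (Eventually.of_forall fun x => ?_)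
  · exact ((continuous_id.pow n).mul (wt_cont A s c)).aestronglyMeasurable
  · rw [norm_mul, norm_mul, norm_of_nonneg (wt_pos A s c x).le, norm_of_nonneg (exp_pos _).le]
    nlinarith [mul_le_mul_of_nonneg_left (hb x) (norm_nonneg (x ^ n))]

lemma int_bdd (A s c : ℝ) (hs : 0 < s) (n : ℕ) (f : ℝ → ℝ) (hf : Continuous f) (K : ℝ)
    (hK : ∀ x, |f x| ≤ K) : Integrable fun x : ℝ => x ^ n * f x * wt A s c x := by
  have h1 := (int_basic A s c hs n).bdd_mul (c := K) hf.aestronglyMeasurable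
    (Eventually.of_forall fun x => by simpa using hK x)
  refine h1.congr (Eventually.of_forall fun x => ?_)
  simp only
  ring

lemma arctan_bdd (x : ℝ) : |arctan x| ≤ 2 := by
  rw [abs_le]
  constructor <;> linarith [neg_pi_div_two_lt_arctan x, arctan_lt_pi_div_two x, pi_lt_d2]

lemma int_exp (A s c h : ℝ) (hs : 0 < s) (n : ℕ) :
    Integrable fun x : ℝ => x ^ n * exp (h * arctan (c * x)) * wt A s c x := by
  refine int_bdd A s c hs n _ (by fun_prop) (exp (|h| * 2)) (fun x => ?_)
  rw [abs_of_pos (exp_pos _)]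
  apply exp_le_exp.2
  calc h * arctan (c * x) ≤ |h * arctan (c * x)| := le_abs_self _
    _ = |h| * |arctan (c * x)| := abs_mul _ _
    _ ≤ _ := mul_le_mul_of_nonneg_left (arctan_bdd _) (abs_nonneg _)

lemma int_poly_exp (A s c h p q r t : ℝ) (hs : 0 < s) :
    Integrable fun x : ℝ => (p + q * x + r * x ^ 2 + t * x ^ 3) *
      (exp (h * arctan (c * x)) * wt A s c x) := by
  have := ((((int_exp A s c h hs 0).const_mul p).add ((int_exp A s c h hs 1).const_mul q)).add
    ((int_exp A s c h hs 2).const_mul r)).add ((int_exp A s c h hs 3).const_mul t)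
  refine this.congr (Eventually.of_forall fun x => ?_)
  simp only [Pi.add_apply]
  ring

lemma int_sinh (A s c b h : ℝ) (hs : 0 < s) :
    Integrable fun x : ℝ => (b * x - x ^ 3) * sinh (h * arctan (c * x)) * wt A s c x := by
  have := ((int_poly_exp A s c h 0 b 0 (-1) hs).sub
    (int_poly_exp A s c (-h) 0 b 0 (-1) hs)).const_mul (1 / 2)
  refine this.congr (Eventually.of_forall fun x => ?_)
  simp only [Pi.sub_apply, sinh_eq, neg_mul]
  ring

lemma int_cosh (A s c b h : ℝ) (hs : 0 < s) :
    Integrable fun x : ℝ => (b * x - x ^ 3) * cosh (h * arctan (c * x)) * wt A s c x := by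
  have := ((int_poly_exp A s c h 0 b 0 (-1) hs).add
    (int_poly_exp A s c (-h) 0 b 0 (-1) hs)).const_mul (1 / 2)
  refine this.congr (Eventually.of_forall fun x => ?_)
  simp only [Pi.add_apply, cosh_eq, neg_mul]
  ring

lemma exp_int_eq (A s c b h : ℝ) (hs : 0 < s) :
    ∫ x : ℝ, (b * x - x ^ 3) * (exp (h * arctan (c * x)) * wt A s c x) = Gf A s c b h := by
  have h1 : ∫ x : ℝ, (b * x - x ^ 3) * cosh (h * arctan (c * x)) * wt A s c x = 0 := by
    have h2 := integral_neg_eq_self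
      (fun x : ℝ => (b * x - x ^ 3) * cosh (h * arctan (c * x)) * wt A s c x) volume
    have h3 : ∀ x : ℝ, (b * -x - (-x) ^ 3) * cosh (h * arctan (c * -x)) * wt A s c (-x) =
        -((b * x - x ^ 3) * cosh (h * arctan (c * x)) * wt A s c x) := by
      intro x
      rw [wt_neg, mul_neg c, arctan_neg, mul_neg h, cosh_neg]
      ring
    simp only [h3, integral_neg] at h2
    linarith
  have h2 := integral_add (int_cosh A s c b h hs) (int_sinh A s c b h hs)
  rw [h1, zero_add] at h2
  rw [Gf, ← h2]
  congr 1
  ext x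
  rw [← cosh_add_sinh]
  ring

lemma by_parts (A s c h : ℝ) (hs : 0 < s) :
    ∫ x : ℝ, (h * c + (2 * c ^ 2 * (1 + A) - 2 * s) * x + 0 * x ^ 2 + (-(2 * s * c ^ 2)) * x ^ 3) *
      (exp (h * arctan (c * x)) * wt A s c x) = 0 := by
  refine integral_eq_zero_of_hasDerivAt_of_integrable
    (f := fun x => (1 + 0 * x + c ^ 2 * x ^ 2 + 0 * x ^ 3) *
      (exp (h * arctan (c * x)) * wt A s c x)) ?_
    (int_poly_exp A s c h _ _ _ _ hs) (int_poly_exp A s c h _ _ _ _ hs)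
  intro x
  have hD : 0 < 1 + c ^ 2 * x ^ 2 := by positivity
  have d1 : HasDerivAt (fun x : ℝ => 1 + c ^ 2 * x ^ 2) (c ^ 2 * (2 * x)) x := by
    simpa using ((hasDerivAt_pow 2 x).const_mul (c ^ 2)).const_add 1
  have d2 := (d1.log hD.ne').const_mul A
  have d3 : HasDerivAt (fun x : ℝ => s * x ^ 2) (s * (2 * x)) x := by
    simpa using (hasDerivAt_pow 2 x).const_mul s
  have d4 : HasDerivAt (fun x : ℝ => c * x) c x := by
    simpa using (hasDerivAt_id x).const_mul c
  have d5 := d4.arctan.const_mul h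
  have d6 := d1.mul (d5.exp.mul (d2.sub d3).exp)
  have e : (fun x => (1 + 0 * x + c ^ 2 * x ^ 2 + 0 * x ^ 3) *
      (exp (h * arctan (c * x)) * wt A s c x)) = fun x => (1 + c ^ 2 * x ^ 2) *
      (exp (h * arctan (c * x)) * exp (A * log (1 + c ^ 2 * x ^ 2) - s * x ^ 2)) := by
    ext x
    rw [wt]; ring
  rw [e]
  refine d6.congr_deriv ?_
  simp only [wt, Pi.mul_apply, Pi.sub_apply]
  have : 1 + (c * x) ^ 2 = 1 + c ^ 2 * x ^ 2 := by ring
  rw [this]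
  generalize exp (A * log (1 + c ^ 2 * x ^ 2) - s * x ^ 2) = E
  generalize exp (h * arctan (c * x)) = E'
  field_simp
  ring

lemma integral_pos_cont (f : ℝ → ℝ) (hi : Integrable f) (h0 : ∀ x, 0 ≤ f x) (U : Set ℝ)
    (hU : IsOpen U) (hne : U.Nonempty) (hp : ∀ x ∈ U, 0 < f x) : 0 < ∫ x, f x := by
  rw [integral_pos_iff_support_of_nonneg h0 hi]
  exact (hU.measure_pos volume hne).trans_le (measure_mono fun x hx => (hp x hx).ne')

lemma sinh_ratio (h1 h2 : ℝ) (p1 : 0 < h1) (h12 : h1 < h2) :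
    StrictMonoOn (fun y => sinh (h2 * y) / sinh (h1 * y)) (Ioi 0) := by
  have hk : ∀ y, 0 < y → 0 < h2 * cosh (h2 * y) * sinh (h1 * y) -
      sinh (h2 * y) * (h1 * cosh (h1 * y)) := by
    have : StrictMonoOn (fun y => h2 * cosh (h2 * y) * sinh (h1 * y) -
      sinh (h2 * y) * (h1 * cosh (h1 * y))) (Ici 0) := by
      apply strictMonoOn_of_deriv_pos (convex_Ici 0) (by fun_prop)
      intro y hy
      rw [interior_Ici] at hy
      have hy : 0 < y := hy
      have a1 : ∀ k : ℝ, HasDerivAt (fun y : ℝ => k * y) k y := fun k => by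
        simpa using (hasDerivAt_id y).const_mul k
      have d := ((((a1 h2).cosh.const_mul h2).mul (a1 h1).sinh).sub
        ((a1 h2).sinh.mul ((a1 h1).cosh.const_mul h1)))
      have : deriv (fun y => h2 * cosh (h2 * y) * sinh (h1 * y) -
        sinh (h2 * y) * (h1 * cosh (h1 * y))) y = _ := d.deriv
      rw [this]
      have s1 : 0 < sinh (h1 * y) := sinh_pos_iff.2 (by positivity)
      have s2 : 0 < sinh (h2 * y) := sinh_pos_iff.2 (mul_pos (p1.trans h12) hy)
      have : 0 < (h2 ^ 2 - h1 ^ 2) * (sinh (h1 * y) * sinh (h2 * y)) := by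
        have : 0 < h2 ^ 2 - h1 ^ 2 := by nlinarith
        positivity
      nlinarith
    intro y hy
    have := this (self_mem_Ici) (mem_Ici.2 hy.le) hy
    simpa using this
  apply strictMonoOn_of_deriv_pos (convex_Ioi 0)
  · apply ContinuousOn.div (by fun_prop) (by fun_prop)
    intro y hy
    exact (sinh_pos_iff.2 (mul_pos p1 hy)).ne'
  · intro y hy
    rw [interior_Ioi] at hy
    have hy : 0 < y := hy
    have s1 : 0 < sinh (h1 * y) := sinh_pos_iff.2 (by positivity)
    have a1 : ∀ k : ℝ, HasDerivAt (fun y : ℝ => k * y) k y := fun k => by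
      simpa using (hasDerivAt_id y).const_mul k
    have d := (a1 h2).sinh.div (a1 h1).sinh s1.ne'
    have : deriv (fun y => sinh (h2 * y) / sinh (h1 * y)) y = _ := d.deriv
    rw [this]
    apply div_pos _ (by positivity)
    have := hk y hy
    linarith

/-- Key total positivity inequality. -/
lemma sinh_tp (h1 h2 y y' : ℝ) (p1 : 0 < h1) (h12 : h1 < h2) (hy : 0 < y) (hyy : y < y') :
    sinh (h2 * y) * sinh (h1 * y') < sinh (h2 * y') * sinh (h1 * y) := by
  have := sinh_ratio h1 h2 p1 h12 (mem_Ioi.2 hy) (mem_Ioi.2 (hy.trans hyy)) hyy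
  have s1 : 0 < sinh (h1 * y) := sinh_pos_iff.2 (by positivity)
  have s2 : 0 < sinh (h1 * y') := sinh_pos_iff.2 (mul_pos p1 (hy.trans hyy))
  simp only at this
  rwa [div_lt_div_iff₀ s1 s2] at this

lemma q_abs (b c h x : ℝ) : (b * x - x ^ 3) * sinh (h * arctan (c * x)) =
    (b * |x| - |x| ^ 3) * sinh (h * arctan (c * |x|)) := by
  rcases abs_choice x with e | e <;> rw [e]
  rw [mul_neg c, arctan_neg, mul_neg h, sinh_neg]
  ring

lemma G_tp (A s c r h1 h2 : ℝ) (hs : 0 < s) (hc : 0 < c) (hr : 0 < r) (p1 : 0 < h1)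
    (h12 : h1 < h2) :
    sinh (h1 * arctan (c * r)) * Gf A s c (r ^ 2) h2 <
      sinh (h2 * arctan (c * r)) * Gf A s c (r ^ 2) h1 := by
  have i1 := (int_sinh A s c (r ^ 2) h1 hs).const_mul (sinh (h2 * arctan (c * r)))
  have i2 := (int_sinh A s c (r ^ 2) h2 hs).const_mul (sinh (h1 * arctan (c * r)))
  have key : ∀ x : ℝ, 0 < x → x ≠ r →
      0 < (r ^ 2 * x - x ^ 3) * (sinh (h2 * arctan (c * r)) * sinh (h1 * arctan (c * x)) -
        sinh (h1 * arctan (c * r)) * sinh (h2 * arctan (c * x))) := by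
    intro x hx hxr
    have ap : ∀ z, 0 < z → 0 < arctan (c * z) := fun z hz => by
      rw [← arctan_zero]; exact arctan_strictMono (by positivity)
    have am : ∀ z z', z < z' → arctan (c * z) < arctan (c * z') := fun z z' hz =>
      arctan_strictMono (by gcongr)
    have e : r ^ 2 * x - x ^ 3 = x * (r + x) * (r - x) := by ring
    rw [e]
    rcases lt_or_gt_of_ne hxr with hlt | hlt
    · have := sinh_tp h1 h2 _ _ p1 h12 (ap x hx) (am _ _ hlt)
      apply mul_pos (by have := sub_pos.2 hlt; positivity)
      linarith
    · have := sinh_tp h1 h2 _ _ p1 h12 (ap r hr) (am _ _ hlt)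
      apply mul_pos_of_neg_of_neg
      · exact mul_neg_of_pos_of_neg (by positivity) (by linarith)
      · linarith
  have rew : ∀ x : ℝ, sinh (h2 * arctan (c * r)) * ((r ^ 2 * x - x ^ 3) *
      sinh (h1 * arctan (c * x)) * wt A s c x) - sinh (h1 * arctan (c * r)) *
      ((r ^ 2 * x - x ^ 3) * sinh (h2 * arctan (c * x)) * wt A s c x) =
      (r ^ 2 * |x| - |x| ^ 3) * (sinh (h2 * arctan (c * r)) * sinh (h1 * arctan (c * |x|)) -
        sinh (h1 * arctan (c * r)) * sinh (h2 * arctan (c * |x|))) * wt A s c x := by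
    intro x
    rw [q_abs, q_abs (h := h2)]
    ring
  have := integral_pos_cont _ (i1.sub i2) (fun x => ?_) (Ioi r) isOpen_Ioi ⟨r + 1, by simp⟩ ?_
  · simp only [Pi.sub_apply] at this
    rw [integral_sub i1 i2, integral_const_mul, integral_const_mul] at this
    exact sub_pos.1 this
  · simp only [Pi.sub_apply]
    rw [rew]
    apply mul_nonneg _ (wt_pos A s c x).le
    rcases eq_or_lt_of_le (abs_nonneg x) with e | e
    · rw [← e]; simp
    · by_cases hx : |x| = r
      · rw [hx]; ring_nf; rfl
      · exact (key _ e hx).le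
  · intro x hx
    have hx : r < x := hx
    simp only [Pi.sub_apply]
    rw [rew, abs_of_pos (hr.trans hx)]
    exact mul_pos (key x (hr.trans hx) hx.ne') (wt_pos _ _ _ _)

lemma G_neg (A s c r : ℝ) (hs : 0 < s) (hc : 0 < c) (hr : 0 < r) :
    ∃ h, 1 < h ∧ Gf A s c (r ^ 2) h < 0 := by
  set P : ℝ → ℝ := fun x => |r ^ 2 * x - x ^ 3| * wt A s c x with hP
  have iP : Integrable P := by
    have := (int_cosh A s c (r ^ 2) 0 hs).norm
    refine this.congr (Eventually.of_forall fun x => ?_)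
    simp [hP, abs_mul, abs_of_pos (wt_pos A s c x)]
  have P0 : ∀ x, 0 ≤ P x := fun x => mul_nonneg (abs_nonneg _) (wt_pos _ _ _ _).le
  set Q := (Ioi (2 * r)).indicator P with hQ
  have iQ : Integrable Q := iP.indicator measurableSet_Ioi
  have C2 : 0 < ∫ x, Q x := by
    refine integral_pos_cont Q iQ (fun x => indicator_nonneg (fun x _ => P0 x) x) (Ioi (2 * r))
      isOpen_Ioi ⟨2 * r + 1, by simp⟩ fun x hx => ?_
    rw [hQ, indicator_of_mem hx]
    have hx : 2 * r < x := hx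
    apply mul_pos _ (wt_pos _ _ _ _)
    rw [abs_pos]
    have e : r ^ 2 * x - x ^ 3 = x * (r + x) * (r - x) := by ring
    rw [e]
    exact mul_ne_zero (by nlinarith) (by linarith)
  have C1 : 0 ≤ ∫ x, P x := integral_nonneg P0
  set y0 := arctan (c * r) with hy0
  set y1 := arctan (c * (2 * r)) with hy1
  have y0p : 0 < y0 := by rw [hy0, ← arctan_zero]; exact arctan_strictMono (by positivity)
  have y01 : y0 < y1 := arctan_strictMono (by nlinarith [mul_pos hc hr])
  obtain ⟨h, hh1, hh2⟩ : ∃ h : ℝ, 1 < h ∧ ∫ x, P x < h * ((y1 - y0) / 2 * ∫ x, Q x) := by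
    have hpos : 0 < (y1 - y0) / 2 * ∫ x, Q x := mul_pos (by linarith) C2
    refine ⟨(∫ x, P x) / ((y1 - y0) / 2 * ∫ x, Q x) + 2, ?_, ?_⟩
    · have := div_nonneg C1 hpos.le
      linarith
    · rw [add_mul, div_mul_cancel₀ _ hpos.ne']
      linarith
  refine ⟨h, hh1, ?_⟩
  have h0 : 0 < h := by linarith
  have s0 : 0 < sinh (h * y0) := sinh_pos_iff.2 (by positivity)
  have hle : Gf A s c (r ^ 2) h ≤ sinh (h * y0) * (∫ x, P x) - sinh (h * y1) * ∫ x, Q x := by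
    rw [← integral_const_mul, ← integral_const_mul,
      ← integral_sub (iP.const_mul _) (iQ.const_mul _), Gf]
    apply integral_mono (int_sinh A s c _ h hs) ((iP.const_mul _).sub (iQ.const_mul _))
    intro x
    simp only [Pi.sub_apply]
    have hPx : P x = |r ^ 2 * |x| - |x| ^ 3| * wt A s c x := by
      simp only [hP]
      congr 1
      rcases abs_choice x with e | e <;> rw [e]
      rw [← abs_neg]; congr 1; ring
    have hw := wt_pos A s c x
    have e : r ^ 2 * |x| - |x| ^ 3 = |x| * (r + |x|) * (r - |x|) := by ring
    have hx0 := abs_nonneg x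
    have hQx : Q x = 0 ∨ (2 * r < |x| ∧ Q x = P x) := by
      by_cases hx : x ∈ Ioi (2 * r)
      · right
        refine ⟨lt_of_lt_of_le hx (le_abs_self x), ?_⟩
        rw [hQ, indicator_of_mem hx]
      · left
        rw [hQ, indicator_of_notMem hx]
    rw [q_abs]
    have hm : ∀ z z', z ≤ z' → sinh (h * arctan (c * z)) ≤ sinh (h * arctan (c * z')) := by
      intro z z' hz
      apply sinh_le_sinh.2
      apply mul_le_mul_of_nonneg_left _ h0.le
      exact arctan_strictMono.monotone (by gcongr)
    rcases le_or_gt |x| r with hxr | hxr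
    · have hg : 0 ≤ r ^ 2 * |x| - |x| ^ 3 := by
        rw [e]; have := sub_nonneg.2 hxr; positivity
      rw [abs_of_nonneg hg] at hPx
      have hQ0 : Q x = 0 := by
        rcases hQx with h' | h'
        · exact h'
        · linarith [h'.1]
      rw [hQ0, hPx]
      have := mul_le_mul_of_nonneg_left (hm _ _ hxr) (mul_nonneg hg hw.le)
      linarith
    · have hg : r ^ 2 * |x| - |x| ^ 3 ≤ 0 := by
        rw [e]; exact mul_nonpos_of_nonneg_of_nonpos (by positivity) (by linarith)
      rw [abs_of_nonpos hg] at hPx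
      have hp : 0 ≤ -(r ^ 2 * |x| - |x| ^ 3) * wt A s c x := mul_nonneg (by linarith) hw.le
      rcases hQx with h' | h'
      · rw [h', hPx]
        have a1 := mul_nonneg hp s0.le
        have a2 := mul_nonneg hp (s0.le.trans (hm _ _ hxr.le))
        linarith
      · rw [h'.2, hPx]
        have a1 := mul_nonneg hp s0.le
        have a2 := mul_le_mul_of_nonneg_left (hm _ _ h'.1.le) hp
        linarith
  have hsq : sinh (h * y0) * (h * (y1 - y0) / 2) ≤ sinh (h * y1) := by
    have e : h * y1 = h * y0 + h * (y1 - y0) := by ring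
    have hv : 0 ≤ h * (y1 - y0) := mul_nonneg h0.le (by linarith)
    rw [e, sinh_add]
    have a1 : h * (y1 - y0) / 2 ≤ cosh (h * (y1 - y0)) := by
      rw [cosh_eq]
      have := add_one_le_exp (h * (y1 - y0))
      have := exp_pos (-(h * (y1 - y0)))
      linarith
    have a2 := mul_le_mul_of_nonneg_left a1 s0.le
    have a3 : 0 ≤ cosh (h * y0) * sinh (h * (y1 - y0)) :=
      mul_nonneg (cosh_pos _).le (sinh_nonneg_iff.2 hv)
    linarith
  have := mul_le_mul_of_nonneg_right hsq C2.le
  have := mul_lt_mul_of_pos_left hh2 s0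
  nlinarith

lemma G_pos (A s c r : ℝ) (hs : 0 < s) (hc : 0 < c) (hr : 0 < r) :
    ∃ T, 0 < T ∧ ∀ t, T < t → 0 < Gf (A - t) s c (r ^ 2) 1 := by
  set f : ℝ → ℝ := fun x => (r ^ 2 * x - x ^ 3) * sinh (1 * arctan (c * x)) * wt A s c x with hf
  have iff : Integrable f := int_sinh A s c (r ^ 2) 1 hs
  set P : ℝ → ℝ := fun x => |f x| with hP
  have iP : Integrable P := iff.norm
  have P0 : ∀ x, 0 ≤ P x := fun x => abs_nonneg _
  set Q := (Ioo 0 (r / 2)).indicator P with hQ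
  have iQ : Integrable Q := iP.indicator measurableSet_Ioo
  have ap : ∀ z, 0 < z → 0 < sinh (1 * arctan (c * z)) := fun z hz => by
    rw [sinh_pos_iff, one_mul, ← arctan_zero]; exact arctan_strictMono (by positivity)
  have C2 : 0 < ∫ x, Q x := by
    refine integral_pos_cont Q iQ (fun x => indicator_nonneg (fun x _ => P0 x) x) (Ioo 0 (r / 2))
      isOpen_Ioo ⟨r / 4, by constructor <;> linarith⟩ fun x hx => ?_
    rw [hQ, indicator_of_mem hx]
    simp only [hP, hf]
    rw [abs_pos]
    have e : r ^ 2 * x - x ^ 3 = x * (r + x) * (r - x) := by ring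
    rw [e]
    have hx1 := hx.1
    have hx2 : 0 < r - x := by linarith [hx.2]
    have := ap x hx1
    have := wt_pos A s c x
    positivity
  have C1 : 0 ≤ ∫ x, P x := integral_nonneg P0
  set L : ℝ → ℝ := fun x => log (1 + c ^ 2 * x ^ 2) with hL
  have Lmono : ∀ x z, |x| ≤ z → L x ≤ L z := by
    intro x z hxz
    apply log_le_log (by positivity)
    rw [← sq_abs x]
    gcongr
  have Lmono' : ∀ x z, 0 ≤ z → z ≤ |x| → L z ≤ L x := by
    intro x z hz hxz
    apply log_le_log (by positivity)
    rw [← sq_abs x]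
    gcongr
  have Llt : L (r / 2) < L r := by
    apply log_lt_log (by positivity)
    gcongr
    linarith
  set d := L r - L (r / 2) with hd
  have dpos : 0 < d := sub_pos.2 Llt
  have hpos : 0 < d * ∫ x, Q x := mul_pos dpos C2
  refine ⟨(∫ x, P x) / (d * ∫ x, Q x) + 1, by have := div_nonneg C1 hpos.le; linarith, ?_⟩
  intro t ht
  have ht0 : 0 < t := by have := div_nonneg C1 hpos.le; linarith
  have hT : ∫ x, P x < t * (d * ∫ x, Q x) := by
    rw [← div_lt_iff₀ hpos]; linarith
  have hwt : ∀ x, wt (A - t) s c x = wt A s c x * exp (-t * L x) := by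
    intro x
    rw [wt, wt, ← exp_add]
    congr 1
    simp only [hL]
    ring
  have hge : exp (-t * L (r / 2)) * (∫ x, Q x) - exp (-t * L r) * (∫ x, P x) ≤
      Gf (A - t) s c (r ^ 2) 1 := by
    rw [← integral_const_mul, ← integral_const_mul,
      ← integral_sub (iQ.const_mul _) (iP.const_mul _), Gf]
    apply integral_mono ((iQ.const_mul _).sub (iP.const_mul _)) (int_sinh _ s c _ 1 hs)
    intro x
    simp only [Pi.sub_apply]
    rw [hwt, ← mul_assoc]
    change _ ≤ f x * _
    have hfx : f x = (|x| * (r + |x|) * (r - |x|)) * sinh (1 * arctan (c * |x|)) * wt A s c x := by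
      simp only [hf]
      rw [q_abs]; ring
    have hw := wt_pos A s c x
    have hx0 := abs_nonneg x
    have hs0 : 0 ≤ sinh (1 * arctan (c * |x|)) := by
      rcases eq_or_lt_of_le hx0 with e | e
      · rw [← e]; simp
      · exact (ap _ e).le
    have hPx : P x = |f x| := rfl
    have hE : ∀ z z', L z ≤ L z' → exp (-t * L z') ≤ exp (-t * L z) := fun z z' hz =>
      exp_le_exp.2 (by nlinarith)
    have E0 := fun z => exp_pos (-t * L z)
    have hQx : Q x = 0 ∨ (|x| < r / 2 ∧ Q x = P x) := by
      by_cases hx : x ∈ Ioo 0 (r / 2)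
      · right
        refine ⟨by rw [abs_of_pos hx.1]; exact hx.2, ?_⟩
        rw [hQ, indicator_of_mem hx]
      · left
        rw [hQ, indicator_of_notMem hx]
    rcases le_or_gt |x| r with hxr | hxr
    · have hg : 0 ≤ f x := by
        rw [hfx]; have := sub_nonneg.2 hxr; positivity
      rw [abs_of_nonneg hg] at hPx
      have a0 := mul_nonneg hg (E0 r).le
      have a1 := mul_nonneg hg (E0 x).le
      rcases hQx with h' | h'
      · rw [h', hPx]
        linarith
      · rw [h'.2, hPx]
        have := mul_le_mul_of_nonneg_left (hE _ _ (Lmono _ _ h'.1.le)) hg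
        linarith
    · have hg : f x ≤ 0 := by
        rw [hfx]
        have : 0 ≤ (|x| * (r + |x|) * (|x| - r)) * sinh (1 * arctan (c * |x|)) * wt A s c x := by
          have := sub_pos.2 hxr
          positivity
        linarith
      rw [abs_of_nonpos hg] at hPx
      have hQ0 : Q x = 0 := by
        rcases hQx with h' | h'
        · exact h'
        · linarith [h'.1]
      rw [hQ0, hPx]
      have := mul_le_mul_of_nonneg_left (hE _ _ (Lmono' x r hr.le hxr.le)) (neg_nonneg.2 hg)
      linarith
  refine lt_of_lt_of_le ?_ hge
  have e : exp (-t * L (r / 2)) = exp (-t * L r) * exp (t * d) := by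
    rw [← exp_add]; congr 1; rw [hd]; ring
  rw [e]
  have a1 : t * d ≤ exp (t * d) := by linarith [add_one_le_exp (t * d)]
  have a2 := mul_le_mul_of_nonneg_right a1 C2.le
  have a3 : ∫ x, P x < exp (t * d) * ∫ x, Q x := by linarith
  have := mul_lt_mul_of_pos_left a3 (exp_pos (-t * L r))
  linarith

lemma G_cont (A s c b M : ℝ) (hs : 0 < s) : ContinuousOn (Gf A s c b) (Icc 1 M) := by
  unfold Gf
  refine continuousOn_of_dominated
    (bound := fun x => ‖(b * x - x ^ 3) * cosh (M * arctan (c * x)) * wt A s c x‖) ?_ ?_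
    (int_cosh A s c b M hs).norm ?_
  · exact fun h _ => (int_sinh A s c b h hs).aestronglyMeasurable
  · intro h hh
    refine Eventually.of_forall fun x => ?_
    rw [norm_mul, norm_mul, norm_mul, norm_mul]
    gcongr
    rw [norm_eq_abs, norm_eq_abs, abs_of_pos (cosh_pos (M * arctan (c * x))), abs_sinh]
    apply (sinh_lt_cosh _).le.trans
    rw [cosh_le_cosh, abs_abs, abs_mul, abs_mul]
    apply mul_le_mul_of_nonneg_right _ (abs_nonneg _)
    rw [abs_of_pos (by linarith [hh.1] : 0 < h), abs_of_pos (by linarith [hh.1, hh.2] : 0 < M)]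
    exact hh.2
  · exact Eventually.of_forall fun x => by fun_prop

lemma G_odd (A s c b h : ℝ) : Gf A s c b (-h) = - Gf A s c b h := by
  simp only [Gf]
  rw [← integral_neg]
  congr 1
  ext x
  rw [neg_mul, sinh_neg]
  ring

lemma G_roots (A s c r : ℝ) (hs : 0 < s) (hc : 0 < c) (hr : 0 < r)
    (h1 : 0 < Gf A s c (r ^ 2) 1) :
    ∃ h0, 0 < h0 ∧ ∀ h, Gf A s c (r ^ 2) h = 0 ↔ (h = 0 ∨ h = h0 ∨ h = -h0) := by
  obtain ⟨M, hM1, hM⟩ := G_neg A s c r hs hc hr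
  obtain ⟨h0, hh0, hz⟩ := intermediate_value_Icc' hM1.le (G_cont A s c (r ^ 2) M hs)
    (show (0 : ℝ) ∈ Icc _ _ from ⟨hM.le, h1.le⟩)
  have h0p : 0 < h0 := by linarith [hh0.1]
  have yp : 0 < arctan (c * r) := by rw [← arctan_zero]; exact arctan_strictMono (by positivity)
  have uniq : ∀ h, 0 < h → Gf A s c (r ^ 2) h = 0 → h = h0 := by
    intro h hp hh
    rcases lt_trichotomy h h0 with hl | hl | hl
    · have := G_tp A s c r h h0 hs hc hr hp hl
      rw [hh, hz] at this; simp at this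
    · exact hl
    · have := G_tp A s c r h0 h hs hc hr h0p hl
      rw [hh, hz] at this; simp at this
  refine ⟨h0, h0p, fun h => ⟨fun hh => ?_, ?_⟩⟩
  · rcases lt_trichotomy h 0 with hl | hl | hl
    · right; right
      have := uniq (-h) (by linarith) (by rw [G_odd, hh, neg_zero])
      linarith
    · left; exact hl
    · right; left; exact uniq h hl hh
  · rintro (rfl | rfl | rfl)
    · simp [Gf]
    · exact hz
    · rw [G_odd, hz, neg_zero]

lemma F_zero_iff (ν σa σm a θ μ : ℝ) (hσa : 0 < σa) (hσm : 0 < σm) (hθ : 0 < θ) :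
    F ν σa σm a θ μ = 0 ↔ Gf ((a - ν * σm ^ 2 + σa ^ 2 / σm ^ 2) / σm ^ 2 - θ / σm ^ 2)
      (1 / σm ^ 2) (σm / σa) (a + (1 - ν) * σm ^ 2) (2 * θ * μ / (σa * σm)) = 0 := by
  set A := (a - ν * σm ^ 2 + σa ^ 2 / σm ^ 2) / σm ^ 2 - θ / σm ^ 2 with hA
  set s := 1 / σm ^ 2 with hs
  set c := σm / σa with hc
  set h := 2 * θ * μ / (σa * σm) with hh
  set b := a + (1 - ν) * σm ^ 2 with hb
  have s0 : 0 < s := by positivity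
  have hrho : ∀ x, rho0 ν σa σm a θ μ x = exp (h * arctan (c * x)) * wt A s c x := by
    intro x
    rw [rho0, wt, ← exp_add]
    have e1 : σm * x / σa = c * x := by rw [hc]; ring
    have e2 : σm ^ 2 / σa ^ 2 = c ^ 2 := by rw [hc]; ring
    have e3 : (a - θ - ν * σm ^ 2 + σa ^ 2 / σm ^ 2) / σm ^ 2 = A := by rw [hA]; ring
    rw [e1, e2, e3]
    congr 1
    rw [hs]; ring
  have hZ : 0 < Z ν σa σm a θ μ := by
    unfold Z
    simp only [hrho]
    have i := int_poly_exp A s c h 1 0 0 0 s0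
    refine integral_pos_cont _ (by simpa using i) (fun x => ?_) univ isOpen_univ ⟨0, trivial⟩
      (fun x _ => ?_)
    · exact (mul_pos (exp_pos _) (wt_pos _ _ _ _)).le
    · exact mul_pos (exp_pos _) (wt_pos _ _ _ _)
  unfold F
  rw [div_eq_zero_iff, or_iff_left hZ.ne']
  simp only [hrho]
  rw [← exp_int_eq A s c b h s0]
  have i1 : Integrable fun x : ℝ => (x - μ) * (exp (h * arctan (c * x)) * wt A s c x) :=
    (int_poly_exp A s c h (-μ) 1 0 0 s0).congr (Eventually.of_forall fun x => by
      simp only; ring)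
  have i2 : Integrable fun x : ℝ => (b * x - x ^ 3) * (exp (h * arctan (c * x)) * wt A s c x) :=
    (int_poly_exp A s c h 0 b 0 (-1) s0).congr (Eventually.of_forall fun x => by
      simp only; ring)
  have bp := by_parts A s c h s0
  have e : ∀ x : ℝ, (h * c + (2 * c ^ 2 * (1 + A) - 2 * s) * x + 0 * x ^ 2 +
      (-(2 * s * c ^ 2)) * x ^ 3) * (exp (h * arctan (c * x)) * wt A s c x) =
      2 / σa ^ 2 * ((b * x - x ^ 3) * (exp (h * arctan (c * x)) * wt A s c x) -
        θ * ((x - μ) * (exp (h * arctan (c * x)) * wt A s c x))) := by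
    intro x
    have : h * c + (2 * c ^ 2 * (1 + A) - 2 * s) * x + 0 * x ^ 2 +
      (-(2 * s * c ^ 2)) * x ^ 3 = 2 / σa ^ 2 * ((b * x - x ^ 3) - θ * (x - μ)) := by
      rw [hA, hs, hc, hh, hb]
      field_simp
      ring
    rw [this]
    ring
  simp only [e] at bp
  rw [integral_const_mul, integral_sub i2 (i1.const_mul θ), integral_const_mul] at bp
  have bp2 := (mul_eq_zero.1 bp).resolve_left (by positivity)
  constructor
  · intro h'
    rw [h'] at bp2
    linarith
  · intro h'
    rw [h'] at bp2
    have : θ * ∫ x : ℝ, (x - μ) * (exp (h * arctan (c * x)) * wt A s c x) = 0 := by linarith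
    exact (mul_eq_zero.1 this).resolve_left hθ.ne'

/-- For a ≤ 0 (convex potential), a non-Itô interpretation ν ∈ [0,1) and
multiplicative noise with a + (1−ν)·σm² > 0, sufficiently strong cooperation θ produces exactly
three stationary measures: multiplicative noise induces a stable phase. -/
theorem stmt4 (a ν σa σm : ℝ) (ha : a ≤ 0) (hν : ν ∈ Set.Ico (0 : ℝ) 1)
    (hσa : 0 < σa) (hσm : 0 < σm) (h : 0 < a + (1 - ν) * σm ^ 2) :
    ∃ θc : ℝ, 0 < θc ∧ ∀ θ : ℝ, θc < θ →
      {μ : ℝ | F ν σa σm a θ μ = 0}.ncard = 3 := by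
  set b := a + (1 - ν) * σm ^ 2 with hb
  have hr : 0 < √b := Real.sqrt_pos.2 h
  have hrb : √b ^ 2 = b := Real.sq_sqrt h.le
  obtain ⟨T, hT, hG⟩ := G_pos ((a - ν * σm ^ 2 + σa ^ 2 / σm ^ 2) / σm ^ 2) (1 / σm ^ 2)
    (σm / σa) (√b) (by positivity) (by positivity) hr
  refine ⟨T * σm ^ 2, by positivity, fun θ hθ => ?_⟩
  have hθ0 : 0 < θ := lt_trans (by positivity) hθ
  have h1 := hG (θ / σm ^ 2) ((lt_div_iff₀ (by positivity)).2 hθ)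
  obtain ⟨h0, h0p, hroot⟩ := G_roots _ (1 / σm ^ 2) (σm / σa) (√b) (by positivity)
    (by positivity) hr h1
  rw [hrb] at hroot
  set k := 2 * θ / (σa * σm) with hk
  have kp : 0 < k := by positivity
  have hm : 0 < h0 / k := by positivity
  rw [Set.ncard_eq_three]
  refine ⟨0, h0 / k, -(h0 / k), hm.ne, by linarith, by linarith, ?_⟩
  ext μ
  have e : 2 * θ * μ / (σa * σm) = μ * k := by rw [hk]; ring
  simp only [Set.mem_ofPred_eq, Set.mem_insert_iff, Set.mem_singleton_iff]
  rw [F_zero_iff ν σa σm a θ μ hσa hσm hθ0, ← hb, hroot, e, ← neg_div, eq_div_iff kp.ne',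
    eq_div_iff kp.ne']
  simp [kp.ne']
end

section
/- Fix a = 1, θ > 0, σa > 0 and ν ∈ [0,1]. Then lim_{σm → 0⁺} F'_μ(ν, σa, σm, 1, θ)[0] = G'_μ(σa, θ)[0], i.e. as the multiplicative noise intensity tends to zero, the derivative at zero of the self-consistency function converges to that of the Dawson–Shiino model. -/
open MeasureTheory Real Set Filter

/-- Unnormalised Dawson–Shiino stationary density ρDS[μ]. -/
noncomputable def rhoDS (σa θ μ x : ℝ) : ℝ :=
  Real.exp (-(2 / σa ^ 2) * (x ^ 4 / 4 - x ^ 2 / 2 + θ * (x ^ 2 / 2 - μ * x)))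

/-- The Dawson–Shiino self-consistency function G(σa,θ)[μ]. -/
noncomputable def G (σa θ μ : ℝ) : ℝ :=
  (∫ x : ℝ, (x - μ) * rhoDS σa θ μ x) / ∫ x : ℝ, rhoDS σa θ μ x

/-- G'_μ[0] of the Dawson–Shiino model. -/
noncomputable def Gmu' (σa θ : ℝ) : ℝ := deriv (fun μ => G σa θ μ) 0

lemma aux_bound_integrable (b L : ℝ) (hb : 0 < b) :
    Integrable (fun x : ℝ => (1 + |x|) ^ 2 * Real.exp (L * |x|) * Real.exp (-b * x ^ 2)) := by
  have h0 := (integrable_exp_neg_mul_sq (half_pos hb)).const_mul (Real.exp ((|L| + 2) ^ 2 / (2 * b)))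
  refine h0.mono' (by fun_prop) (Eventually.of_forall fun x => ?_)
  have h1 : (1 + |x|) ^ 2 ≤ Real.exp (2 * |x|) := by
    have := Real.add_one_le_exp |x|
    calc (1 + |x|) ^ 2 ≤ (Real.exp |x|) ^ 2 := by
          gcongr; linarith
      _ = Real.exp (2 * |x|) := by rw [← Real.exp_nat_mul]; norm_num
  rw [Real.norm_of_nonneg (by positivity)]
  calc (1 + |x|) ^ 2 * Real.exp (L * |x|) * Real.exp (-b * x ^ 2)
      ≤ Real.exp (2 * |x|) * Real.exp (L * |x|) * Real.exp (-b * x ^ 2) := by gcongr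
    _ = Real.exp (2 * |x| + L * |x| + -b * x ^ 2) := by rw [Real.exp_add, Real.exp_add]
    _ ≤ Real.exp ((|L| + 2) ^ 2 / (2 * b) + -(b / 2) * x ^ 2) := by
        apply Real.exp_le_exp.2
        have h2 : L * |x| ≤ |L| * |x| := by gcongr; exact le_abs_self L
        have h3 : (|L| + 2) * |x| ≤ (|L| + 2) ^ 2 / (2 * b) + b / 2 * x ^ 2 := by
          have : (|L| + 2) ^ 2 / (2 * b) + b / 2 * x ^ 2 - (|L| + 2) * |x|
              = ((|L| + 2) - b * |x|) ^ 2 / (2 * b) := by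
            rw [← sq_abs x]; field_simp; ring
          have h4 : 0 ≤ ((|L| + 2) - b * |x|) ^ 2 / (2 * b) := by positivity
          linarith
        nlinarith
    _ = _ := by rw [Real.exp_add]

lemma aux_hasDeriv (w h g : ℝ → ℝ) (K b L : ℝ) (hb : 0 < b)
    (hw : Continuous w) (hh : Continuous h) (hg : Continuous g)
    (hw0 : ∀ x, 0 ≤ w x) (hwK : ∀ x, w x ≤ K * Real.exp (-b * x ^ 2))
    (hL : 0 ≤ L) (hhL : ∀ x, |h x| ≤ L * |x|) (hgb : ∀ x, |g x| ≤ 1 + |x|) :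
    (∀ μ, |μ| ≤ 1 → Integrable (fun x => g x * (w x * Real.exp (μ * h x)))) ∧
    HasDerivAt (fun μ => ∫ x, g x * (w x * Real.exp (μ * h x))) (∫ x, g x * h x * w x) 0 := by
  have hexp : ∀ μ x, |μ| ≤ 1 → Real.exp (μ * h x) ≤ Real.exp (L * |x|) := by
    intro μ x hμ
    apply Real.exp_le_exp.2
    calc μ * h x ≤ |μ * h x| := le_abs_self _
      _ = |μ| * |h x| := abs_mul _ _
      _ ≤ 1 * (L * |x|) := by gcongr; exact hhL x
      _ = _ := one_mul _
  have hint : ∀ μ, |μ| ≤ 1 → Integrable (fun x => g x * (w x * Real.exp (μ * h x))) := by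
    intro μ hμ
    refine ((aux_bound_integrable b L hb).const_mul K).mono' (by fun_prop)
      (Eventually.of_forall fun x => ?_)
    rw [Real.norm_eq_abs, abs_mul, abs_mul, abs_of_nonneg (hw0 x), Real.abs_exp]
    calc |g x| * (w x * Real.exp (μ * h x))
        ≤ (1 + |x|) ^ 2 * ((K * Real.exp (-b * x ^ 2)) * Real.exp (L * |x|)) := by
          have h1 : |g x| ≤ (1 + |x|) ^ 2 := by nlinarith [hgb x, abs_nonneg x]
          have := hw0 x
          have h2 := hwK x
          have h3 := hexp μ x hμ
          have h4 : 0 ≤ K * Real.exp (-b * x ^ 2) := this.trans h2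
          gcongr
      _ = _ := by ring
  refine ⟨hint, ?_⟩
  have key := hasDerivAt_integral_of_dominated_loc_of_deriv_le (μ := (volume : Measure ℝ))
    (x₀ := (0 : ℝ)) (s := Metric.ball 0 1)
    (F := fun μ x => g x * (w x * Real.exp (μ * h x)))
    (F' := fun μ x => g x * (w x * (Real.exp (μ * h x) * h x)))
    (bound := fun x => (K * L) * ((1 + |x|) ^ 2 * Real.exp (L * |x|) * Real.exp (-b * x ^ 2)))
    (Metric.ball_mem_nhds _ one_pos)
    (Eventually.of_forall fun μ => by fun_prop) (hint 0 (by simp)) (by fun_prop)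
    (Eventually.of_forall fun x μ hμ => ?_) ((aux_bound_integrable b L hb).const_mul _)
    (Eventually.of_forall fun x μ hμ => ?_)
  · have h5 := key.2
    simp only [zero_mul, Real.exp_zero, one_mul] at h5
    have e : (∫ x, g x * h x * w x) = ∫ x, g x * (w x * h x) := by
      congr 1; ext x; ring
    rw [e]
    exact h5
  · have hμ' : |μ| ≤ 1 := by simpa using (mem_ball_zero_iff.1 hμ).le
    rw [Real.norm_eq_abs, abs_mul, abs_mul, abs_mul, abs_of_nonneg (hw0 x), Real.abs_exp]
    have := hw0 x
    have h2 := hwK x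
    have h3 := hexp μ x hμ'
    have h4 : 0 ≤ K * Real.exp (-b * x ^ 2) := this.trans h2
    have h5 : |h x| ≤ L * (1 + |x|) := (hhL x).trans (by gcongr; linarith)
    calc |g x| * (w x * (Real.exp (μ * h x) * |h x|))
        ≤ (1 + |x|) * ((K * Real.exp (-b * x ^ 2)) * (Real.exp (L * |x|) * (L * (1 + |x|)))) := by
          have := hgb x
          gcongr
      _ = _ := by ring
  · have h1 : HasDerivAt (fun μ : ℝ => μ * h x) (h x) μ := by
      simpa using (hasDerivAt_id μ).mul_const (h x)
    exact (h1.exp.const_mul (w x)).const_mul (g x)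

lemma aux_deriv (w h : ℝ → ℝ) (K b L : ℝ) (hb : 0 < b)
    (hw : Continuous w) (hh : Continuous h)
    (hw0 : ∀ x, 0 < w x) (hwK : ∀ x, w x ≤ K * Real.exp (-b * x ^ 2))
    (hL : 0 ≤ L) (hhL : ∀ x, |h x| ≤ L * |x|)
    (hwe : ∀ x, w (-x) = w x) (hho : ∀ x, h (-x) = - h x) :
    0 < ∫ x, w x ∧
    deriv (fun μ => (∫ x, (x - μ) * (w x * Real.exp (μ * h x))) /
      ∫ x, w x * Real.exp (μ * h x)) 0 = (∫ x, x * h x * w x) / (∫ x, w x) - 1 := by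
  obtain ⟨i1, d1⟩ := aux_hasDeriv w h (fun _ => 1) K b L hb hw hh (by fun_prop)
    (fun x => (hw0 x).le) hwK hL hhL (fun x => by simp)
  obtain ⟨i2, d2⟩ := aux_hasDeriv w h (fun x => x) K b L hb hw hh (by fun_prop)
    (fun x => (hw0 x).le) hwK hL hhL (fun x => by simp)
  simp only [one_mul] at i1 d1
  have iw : Integrable w := by simpa using i1 0 (by simp)
  have hpos : 0 < ∫ x, w x := by
    rw [integral_pos_iff_support_of_nonneg (fun x => (hw0 x).le) iw]
    have : Function.support w = univ := by
      ext x; simp [(hw0 x).ne']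
    simp [this]
  refine ⟨hpos, ?_⟩
  have odd1 : ∫ x, x * w x = 0 := by
    have := integral_neg_eq_self (fun x => x * w x) (volume : Measure ℝ)
    simp only [hwe, neg_mul, integral_neg] at this
    linarith
  have dN : HasDerivAt (fun μ => ∫ x, (x - μ) * (w x * Real.exp (μ * h x)))
      ((∫ x, x * h x * w x) - ∫ x, w x) 0 := by
    have h1 := d2.sub ((hasDerivAt_id (0 : ℝ)).mul d1)
    have h2 : (∫ x, x * h x * w x) - ∫ x, w x = (∫ x, x * h x * w x) -
        (1 * (∫ x, w x * Real.exp (0 * h x)) + id 0 * ∫ x, h x * w x) := by simp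
    rw [h2]
    refine h1.congr_of_eventuallyEq ?_
    filter_upwards [Metric.closedBall_mem_nhds (0 : ℝ) one_pos] with μ hμ
    have hμ' : |μ| ≤ 1 := by simpa using hμ
    simp only [Pi.sub_apply, Pi.mul_apply, id]
    rw [← integral_const_mul, ← integral_sub (i2 μ hμ') ((i1 μ hμ').const_mul μ)]
    congr 1; ext x; ring
  have hq := dN.fun_div d1 (by simpa using hpos.ne')
  rw [hq.deriv]
  simp only [zero_mul, Real.exp_zero, mul_one, sub_zero, odd1]
  field_simp

lemma aux_log_upper {u : ℝ} (hu : 0 ≤ u) : Real.log (1 + u) - u ≤ -(u ^ 2 / (2 * (1 + u))) := by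
  have h1 : Real.log (1 + u) ≤ Real.sinh (Real.log (1 + u)) :=
    Real.self_le_sinh_iff.2 (Real.log_nonneg (by linarith))
  rw [Real.sinh_log (by linarith)] at h1
  have : (1 + u - (1 + u)⁻¹) / 2 = u - u ^ 2 / (2 * (1 + u)) := by
    field_simp; ring
  linarith

lemma aux_log_lower {u : ℝ} (hu : 0 ≤ u) : -(u ^ 2 / (u + 2)) ≤ Real.log (1 + u) - u := by
  have h1 := Real.le_log_one_add_of_nonneg hu
  have : 2 * u / (u + 2) = u - u ^ 2 / (u + 2) := by
    field_simp; ring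
  linarith

lemma aux_arctan (y : ℝ) : |Real.arctan y| ≤ |y| := by
  have key : ∀ z : ℝ, 0 ≤ z → |Real.arctan z| ≤ |z| := by
    intro z hz
    rw [abs_of_nonneg hz, abs_of_nonneg (Real.arctan_nonneg.2 hz)]
    have := Real.le_tan (Real.arctan_nonneg.2 hz) (Real.arctan_lt_pi_div_two z)
    rwa [Real.tan_arctan] at this
  rcases le_total 0 y with h | h
  · exact key y h
  · have := key (-y) (by linarith)
    rwa [Real.arctan_neg, abs_neg, abs_neg] at this

/-- The density at `μ = 0`. -/
noncomputable def ww (ν σa θ m x : ℝ) : ℝ := rho0 ν σa m 1 θ 0 x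

noncomputable def hh (σa θ m x : ℝ) : ℝ := 2 * θ / (σa * m) * Real.arctan (m * x / σa)

lemma rho0_eq (ν σa θ m μ x : ℝ) :
    rho0 ν σa m 1 θ μ x = ww ν σa θ m x * Real.exp (μ * hh σa θ m x) := by
  unfold ww rho0 hh
  rw [← Real.exp_add]
  congr 1
  ring

lemma rhoDS_eq (σa θ μ x : ℝ) :
    rhoDS σa θ μ x = rhoDS σa θ 0 x * Real.exp (μ * (2 * θ / σa ^ 2 * x)) := by
  unfold rhoDS
  rw [← Real.exp_add]
  congr 1
  ring

lemma ww_cont (ν σa θ m : ℝ) : Continuous (ww ν σa θ m) := by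
  unfold ww rho0
  have : ∀ x : ℝ, 1 + m ^ 2 / σa ^ 2 * x ^ 2 ≠ 0 := fun x => by positivity
  have h2 : Continuous fun x : ℝ => Real.log (1 + m ^ 2 / σa ^ 2 * x ^ 2) :=
    Continuous.log (by fun_prop) this
  fun_prop

lemma hh_cont (σa θ m : ℝ) : Continuous (hh σa θ m) := by
  unfold hh
  exact continuous_const.mul (Real.continuous_arctan.comp (by fun_prop))

lemma ww_exponent (ν σa θ m x : ℝ) (hσa : 0 < σa) (hm : 0 < m) :
    ww ν σa θ m x = Real.exp ((1 - θ - ν * m ^ 2) * (Real.log (1 + m ^ 2 * (x ^ 2 / σa ^ 2)) / m ^ 2)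
      + σa ^ 2 * ((Real.log (1 + m ^ 2 * (x ^ 2 / σa ^ 2)) - m ^ 2 * (x ^ 2 / σa ^ 2)) / (m ^ 2) ^ 2)) := by
  unfold ww rho0
  have : m ^ 2 / σa ^ 2 * x ^ 2 = m ^ 2 * (x ^ 2 / σa ^ 2) := by ring
  rw [this]
  congr 1
  generalize Real.log (1 + m ^ 2 * (x ^ 2 / σa ^ 2)) = l
  field_simp
  ring

lemma ww_bound (ν σa θ : ℝ) (hσa : 0 < σa) (hν : ν ∈ Set.Icc (0 : ℝ) 1) :
    ∃ K : ℝ, ∀ᶠ m in nhdsWithin (0 : ℝ) (Set.Ioi 0), ∀ x,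
      ww ν σa θ m x ≤ K * Real.exp (-(1 / σa ^ 2) * x ^ 2) := by
  set C : ℝ := |1 - θ| + 1 with hC
  have hCpos : 0 < C := by positivity
  set A : ℝ := σa ^ 2 with hA
  have hApos : 0 < A := by positivity
  -- `A * M / 2 = C + 1`
  set M : ℝ := 2 * (C + 1) / A with hM
  have hMpos : 0 < M := by positivity
  refine ⟨Real.exp (A * (M ^ 2 / 2) / 2), ?_⟩
  have e1 : ∀ᶠ m in nhdsWithin (0 : ℝ) (Set.Ioi 0), m ^ 2 < min 1 (1 / (2 * M)) := by
    have : Tendsto (fun m : ℝ => m ^ 2) (nhdsWithin (0 : ℝ) (Set.Ioi 0)) (nhds 0) := by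
      have h : Continuous fun m : ℝ => m ^ 2 := by fun_prop
      simpa using (h.tendsto 0).mono_left nhdsWithin_le_nhds
    exact this.eventually_lt_const (by positivity)
  filter_upwards [e1, self_mem_nhdsWithin] with m hm hm0 x
  have hm0 : 0 < m := hm0
  rw [ww_exponent ν σa θ m x hσa hm0, ← hA, ← Real.exp_add]
  apply Real.exp_le_exp.2
  set t := x ^ 2 / A with ht
  have ht0 : 0 ≤ t := by positivity
  set s := m ^ 2 with hs
  have hs0 : 0 < s := by positivity
  have hs1 : s ≤ 1 := (hm.le.trans (min_le_left _ _))
  have hsM : s * M ≤ 1 / 2 := by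
    have := (hm.le.trans (min_le_right _ _))
    calc s * M ≤ 1 / (2 * M) * M := by gcongr
      _ = 1 / 2 := by field_simp
  have hxt : -(1 / A) * x ^ 2 = -t := by rw [ht]; ring
  rw [hxt]
  have l0 : 0 ≤ Real.log (1 + s * t) := Real.log_nonneg (by nlinarith [mul_nonneg hs0.le ht0])
  have l1 : Real.log (1 + s * t) / s ≤ t := by
    rw [div_le_iff₀ hs0]
    have := Real.log_le_sub_one_of_pos (show 0 < 1 + s * t by positivity)
    linarith
  have p1 : (1 - θ - ν * s) * (Real.log (1 + s * t) / s) ≤ C * t := by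
    have : 1 - θ - ν * s ≤ C := by
      have := le_abs_self (1 - θ)
      have := mul_nonneg hν.1 hs0.le
      linarith
    have q : 0 ≤ Real.log (1 + s * t) / s := by positivity
    gcongr
  have p2 : (Real.log (1 + s * t) - s * t) / s ^ 2 ≤ -((M * t - M ^ 2 / 2) / 2) := by
    have h1 := aux_log_upper (show 0 ≤ s * t by positivity)
    rw [div_le_iff₀ (by positivity)]
    refine h1.trans ?_
    have h2 : (M * t - M ^ 2 / 2) ≤ t ^ 2 / (1 + s * t) := by
      rw [le_div_iff₀ (by positivity)]
      have a1 : s * M * t ^ 2 ≤ 1 / 2 * t ^ 2 := by gcongr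
      have a2 : 0 ≤ M ^ 2 / 2 * s * t := by positivity
      nlinarith [sq_nonneg (t - M)]
    have h3 : (s * t) ^ 2 / (2 * (1 + s * t)) = (t ^ 2 / (1 + s * t)) / 2 * s ^ 2 := by
      field_simp
    rw [h3]
    have : 0 ≤ s ^ 2 := by positivity
    nlinarith
  have p3 : A * ((Real.log (1 + s * t) - s * t) / s ^ 2) ≤ A * (-((M * t - M ^ 2 / 2) / 2)) := by
    gcongr
  have hAM : A * M = 2 * (C + 1) := by rw [hM]; field_simp
  have : A * (-((M * t - M ^ 2 / 2) / 2)) = -((C + 1) * t) + A * (M ^ 2 / 2) / 2 := by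
    linear_combination (-t / 2) * hAM
  linarith

lemma hh_bound (σa θ m x : ℝ) (hσa : 0 < σa) (hθ : 0 < θ) (hm : 0 < m) :
    |hh σa θ m x| ≤ 2 * θ / σa ^ 2 * |x| := by
  unfold hh
  rw [abs_mul, abs_of_pos (by positivity)]
  calc 2 * θ / (σa * m) * |Real.arctan (m * x / σa)| ≤ 2 * θ / (σa * m) * |m * x / σa| := by
        exact mul_le_mul_of_nonneg_left (aux_arctan _) (by positivity)
    _ = _ := by
        rw [abs_div, abs_mul, abs_of_pos hm, abs_of_pos hσa]; field_simp

lemma hh_lim (σa θ x : ℝ) (hσa : 0 < σa) :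
    Tendsto (fun m => hh σa θ m x) (nhdsWithin 0 (Set.Ioi 0)) (nhds (2 * θ / σa ^ 2 * x)) := by
  have h1 : HasDerivAt (fun m : ℝ => m * x / σa) (x / σa) 0 := by
    simpa using ((hasDerivAt_id (0 : ℝ)).mul_const x).div_const σa
  have h2 := (hasDerivAt_iff_tendsto_slope_zero.1 h1.arctan).mono_left
    (nhdsWithin_mono (0 : ℝ) (fun y (hy : y ∈ Set.Ioi (0 : ℝ)) => (ne_of_gt hy : y ≠ 0)))
  have h3 := h2.const_mul (2 * θ / σa)
  refine (h3.congr ?_).trans (le_of_eq ?_)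
  · intro m
    simp [hh]
    ring
  · congr 1; simp; ring

lemma ww_lim (ν σa θ x : ℝ) (hσa : 0 < σa) :
    Tendsto (fun m => ww ν σa θ m x) (nhdsWithin 0 (Set.Ioi 0)) (nhds (rhoDS σa θ 0 x)) := by
  set t := x ^ 2 / σa ^ 2 with ht
  have ht0 : 0 ≤ t := by positivity
  have lim0 : Tendsto (fun m : ℝ => m) (nhdsWithin (0 : ℝ) (Set.Ioi 0)) (nhds 0) :=
    tendsto_id.mono_left nhdsWithin_le_nhds
  have limc : ∀ f : ℝ → ℝ, ContinuousAt f 0 →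
      Tendsto f (nhdsWithin (0 : ℝ) (Set.Ioi 0)) (nhds (f 0)) :=
    fun f hf => hf.tendsto.mono_left nhdsWithin_le_nhds
  have q2 : Tendsto (fun m : ℝ => (Real.log (1 + m ^ 2 * t) - m ^ 2 * t) / (m ^ 2) ^ 2)
      (nhdsWithin 0 (Set.Ioi 0)) (nhds (-(t ^ 2 / 2))) := by
    refine tendsto_of_tendsto_of_tendsto_of_le_of_le'
      (g := fun m : ℝ => -(t ^ 2 / (m ^ 2 * t + 2)))
      (h := fun m : ℝ => -(t ^ 2 / (2 * (1 + m ^ 2 * t)))) ?_ ?_ ?_ ?_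
    · have := limc (fun m : ℝ => -(t ^ 2 / (m ^ 2 * t + 2)))
        (by fun_prop (disch := simp))
      simpa using this
    · have := limc (fun m : ℝ => -(t ^ 2 / (2 * (1 + m ^ 2 * t))))
        (by fun_prop (disch := simp))
      simpa using this
    · filter_upwards [self_mem_nhdsWithin] with m hm
      have hm : 0 < m := hm
      rw [le_div_iff₀ (by positivity)]
      refine le_trans (le_of_eq ?_) (aux_log_lower (show 0 ≤ m ^ 2 * t by positivity))
      ring
    · filter_upwards [self_mem_nhdsWithin] with m hm
      have hm : 0 < m := hm
      rw [div_le_iff₀ (by positivity)]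
      refine le_trans (aux_log_upper (show 0 ≤ m ^ 2 * t by positivity)) (le_of_eq ?_)
      ring
  have q1 : Tendsto (fun m : ℝ => Real.log (1 + m ^ 2 * t) / m ^ 2)
      (nhdsWithin 0 (Set.Ioi 0)) (nhds t) := by
    have h1 := (q2.mul (limc (fun m : ℝ => m ^ 2) (by fun_prop))).add_const t
    have h2 : Tendsto (fun m : ℝ => (Real.log (1 + m ^ 2 * t) - m ^ 2 * t) / (m ^ 2) ^ 2 * m ^ 2 + t)
      (nhdsWithin 0 (Set.Ioi 0)) (nhds t) := by simpa using h1
    refine h2.congr' ?_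
    filter_upwards [self_mem_nhdsWithin] with m hm
    have hm : 0 < m := hm
    field_simp
    ring
  have q3 := ((limc (fun m : ℝ => 1 - θ - ν * m ^ 2) (by fun_prop)).mul q1).add
    (q2.const_mul (σa ^ 2))
  have q4 := (Real.continuous_exp.tendsto _).comp q3
  have e : rhoDS σa θ 0 x =
      Real.exp ((1 - θ - ν * (0 : ℝ) ^ 2) * t + σa ^ 2 * -(t ^ 2 / 2)) := by
    unfold rhoDS
    congr 1
    rw [ht]
    field_simp
    ring
  rw [e]
  refine q4.congr' ?_
  filter_upwards [self_mem_nhdsWithin] with m hm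
  rw [ww_exponent ν σa θ m x hσa hm]
  rfl

theorem stmt5 (θ σa ν : ℝ) (hθ : 0 < θ) (hσa : 0 < σa) (hν : ν ∈ Set.Icc (0 : ℝ) 1) :
    Tendsto (fun σm : ℝ => Fmu' ν σa σm 1 θ) (nhdsWithin 0 (Set.Ioi 0))
      (nhds (Gmu' σa θ)) := by
  obtain ⟨K, hK⟩ := ww_bound ν σa θ hσa hν
  set b : ℝ := 1 / σa ^ 2 with hb
  have hbpos : 0 < b := by positivity
  set L : ℝ := 2 * θ / σa ^ 2 with hL
  have hLpos : 0 < L := by positivity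
  have hKDS : ∀ x, rhoDS σa θ 0 x ≤ K * Real.exp (-b * x ^ 2) := fun x =>
    le_of_tendsto (ww_lim ν σa θ x hσa) (hK.mono fun m hm => hm x)
  have hDSc : Continuous (rhoDS σa θ 0) := by unfold rhoDS; fun_prop
  obtain ⟨DSpos, DSd⟩ := aux_deriv (rhoDS σa θ 0) (fun x => L * x) K b L hbpos hDSc (by fun_prop)
    (fun x => Real.exp_pos _) hKDS hLpos.le
    (fun x => by rw [abs_mul, abs_of_pos hLpos])
    (fun x => by unfold rhoDS; congr 1; ring) (fun x => by ring)
  have hG : Gmu' σa θ = (∫ x, x * (L * x) * rhoDS σa θ 0 x) / (∫ x, rhoDS σa θ 0 x) - 1 := by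
    rw [← DSd]
    unfold Gmu' G
    have e : ∀ μ x, rhoDS σa θ μ x = rhoDS σa θ 0 x * Real.exp (μ * (L * x)) :=
      fun μ x => rhoDS_eq σa θ μ x
    congr 1
    ext μ
    congr 1
    · congr 1; ext x; rw [e μ x]
    · congr 1; ext x; rw [e μ x]
  have hF : ∀ᶠ m in nhdsWithin (0 : ℝ) (Set.Ioi 0),
      (∫ x, x * hh σa θ m x * ww ν σa θ m x) / (∫ x, ww ν σa θ m x) - 1 = Fmu' ν σa m 1 θ := by
    filter_upwards [hK, self_mem_nhdsWithin] with m hm hm0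
    obtain ⟨-, d⟩ := aux_deriv (ww ν σa θ m) (hh σa θ m) K b L hbpos (ww_cont _ _ _ _)
      (hh_cont _ _ _) (fun x => Real.exp_pos _) hm hLpos.le
      (fun x => hh_bound σa θ m x hσa hθ hm0)
      (fun x => by unfold ww rho0; simp)
      (fun x => by unfold hh; rw [mul_neg, neg_div, Real.arctan_neg]; ring)
    rw [← d]
    unfold Fmu' F Z
    congr 1
    ext μ
    congr 1
    · congr 1; ext x; rw [rho0_eq]
    · congr 1; ext x; rw [rho0_eq]
  rw [hG]
  refine Tendsto.congr' hF ?_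
  have hww0 : ∀ m x, 0 < ww ν σa θ m x := fun m x => Real.exp_pos _
  have hc1 := ww_cont ν σa θ
  have hc2 := hh_cont σa θ
  have B := aux_bound_integrable b 0 hbpos
  refine (Tendsto.div ?_ ?_ DSpos.ne').sub_const 1
  · refine tendsto_integral_filter_of_dominated_convergence
      (fun x => (L * K) * ((1 + |x|) ^ 2 * Real.exp (0 * |x|) * Real.exp (-b * x ^ 2)))
      (Eventually.of_forall fun m => ?_) ?_ (B.const_mul _)
      (Eventually.of_forall fun x => ?_)
    · have := hc1 m
      have := hc2 m
      fun_prop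
    · filter_upwards [hK, self_mem_nhdsWithin] with m hm hm0
      refine Eventually.of_forall fun x => ?_
      rw [Real.norm_eq_abs, abs_mul, abs_mul, abs_of_pos (hww0 m x)]
      have h1 := hh_bound σa θ m x hσa hθ hm0
      have h2 := hm x
      have h3 := (hww0 m x).le
      have h4 := h3.trans h2
      calc |x| * |hh σa θ m x| * ww ν σa θ m x
          ≤ (1 + |x|) * (L * (1 + |x|)) * (K * Real.exp (-b * x ^ 2)) := by
            have h5 : |x| ≤ 1 + |x| := by linarith
            have h6 : |hh σa θ m x| ≤ L * (1 + |x|) := h1.trans (by gcongr)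
            gcongr
        _ = _ := by simp; ring
    · exact ((hh_lim σa θ x hσa).const_mul x).mul (ww_lim ν σa θ x hσa)
  · refine tendsto_integral_filter_of_dominated_convergence
      (fun x => K * Real.exp (-b * x ^ 2))
      (Eventually.of_forall fun m => (hc1 m).aestronglyMeasurable) ?_
      ((integrable_exp_neg_mul_sq hbpos).const_mul _)
      (Eventually.of_forall fun x => ww_lim ν σa θ x hσa)
    filter_upwards [hK] with m hm
    refine Eventually.of_forall fun x => ?_
    rw [Real.norm_of_nonneg (hww0 m x).le]
    exact hm x
end

section
/- Fix a = 1, θ = 1 and ν ∈ (1/2, 1]. Then for every σa > 0, the limit lim_{σm → ∞} F'_μ(ν, σa, σm, 1, 1)[0] exists and is strictly negative; in particular, for any additive noise intensity the system is in the unstable phase for all sufficiently large multiplicative noise intensity. -/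
open MeasureTheory Real Set Filter

open Topology

/-- The rescaled weight. -/
noncomputable def Wt (ν s y : ℝ) : ℝ :=
  Real.exp ((-ν + s ^ 2) * Real.log (1 + y ^ 2) - s ^ 2 * y ^ 2)

/-- The dominating function. -/
noncomputable def Bd (ν y : ℝ) : ℝ := Real.exp (-ν * Real.log (1 + y ^ 2))

lemma Wt_cont (ν s : ℝ) : Continuous (Wt ν s) := by
  unfold Wt
  have : ∀ y : ℝ, 1 + y ^ 2 ≠ 0 := fun y => by positivity
  fun_prop (disch := exact this _)

lemma Bd_integrable (ν : ℝ) (hν : 1 / 2 < ν) : Integrable (Bd ν) := by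
  have h := integrable_rpow_neg_one_add_norm_sq (E := ℝ) (μ := volume) (r := 2 * ν)
    (by simp; linarith)
  refine h.congr (Eventually.of_forall fun y => ?_)
  have : (0 : ℝ) < 1 + y ^ 2 := by positivity
  simp only [Bd, Real.norm_eq_abs, sq_abs]
  rw [Real.rpow_def_of_pos this]
  congr 1
  ring

lemma log_bd (y : ℝ) : Real.log (1 + y ^ 2) ≤ 1 + y ^ 2 / 2 := by
  have h0 : (0 : ℝ) < (1 + y ^ 2) / 2 := by positivity
  have h := Real.log_le_sub_one_of_pos h0
  rw [Real.log_div (by positivity) (by norm_num)] at h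
  have := Real.log_two_lt_d9
  linarith

lemma Wt_le (ν s y : ℝ) : Wt ν s y ≤ Bd ν y := by
  unfold Wt Bd
  apply Real.exp_le_exp.2
  have h := Real.log_le_sub_one_of_pos (show (0 : ℝ) < 1 + y ^ 2 by positivity)
  nlinarith [mul_le_mul_of_nonneg_left h (sq_nonneg s)]

lemma yWt_le (ν s y : ℝ) (hs : |s| ≤ 1) : |s * y| * Wt ν s y ≤ Real.exp 1 * Bd ν y := by
  have hs2 : s ^ 2 ≤ 1 := by
    rw [← sq_abs]; nlinarith [abs_nonneg s]
  have h1 : |s * y| ≤ Real.exp ((s * y) ^ 2 / 2) := by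
    have := Real.add_one_le_exp ((s * y) ^ 2 / 2)
    have h2 : |s * y| ^ 2 = (s * y) ^ 2 := sq_abs _
    nlinarith [sq_nonneg (|s * y| - 1)]
  calc |s * y| * Wt ν s y ≤ Real.exp ((s * y) ^ 2 / 2) * Wt ν s y :=
        mul_le_mul_of_nonneg_right h1 (Real.exp_pos _).le
    _ ≤ Real.exp 1 * Bd ν y := by
        unfold Wt Bd
        rw [← Real.exp_add, ← Real.exp_add]
        apply Real.exp_le_exp.2
        nlinarith [mul_le_mul_of_nonneg_left (log_bd y) (sq_nonneg s)]

lemma Wt_integrable (ν s : ℝ) (hν : 1 / 2 < ν) : Integrable (Wt ν s) := by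
  refine (Bd_integrable ν hν).mono' (Wt_cont ν s).aestronglyMeasurable
    (Eventually.of_forall fun y => ?_)
  rw [Real.norm_eq_abs, abs_of_pos (show 0 < Wt ν s y from Real.exp_pos _)]
  exact Wt_le ν s y

lemma yWt_integrable (ν s : ℝ) (hν : 1 / 2 < ν) (h0 : 0 < s) (hs : s ≤ 1) :
    Integrable (fun y => y * Wt ν s y) := by
  refine ((Bd_integrable ν hν).const_mul (s⁻¹ * Real.exp 1)).mono'
    (continuous_id.mul (Wt_cont ν s)).aestronglyMeasurable
    (Eventually.of_forall fun y => ?_)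
  have h := yWt_le ν s y (by rw [abs_of_pos h0]; exact hs)
  rw [Real.norm_eq_abs, abs_mul, abs_of_pos (show 0 < Wt ν s y from Real.exp_pos _)]
  rw [abs_mul, abs_of_pos h0] at h
  rw [mul_assoc, ← div_eq_inv_mul, le_div_iff₀ h0]
  linarith

lemma abs_arctan_le (y : ℝ) : |Real.arctan y| ≤ 2 := by
  have h1 := Real.arctan_lt_pi_div_two y
  have h2 := Real.neg_pi_div_two_lt_arctan y
  have := Real.pi_lt_four
  rw [abs_le]; constructor <;> linarith

lemma deriv_exp_int (h : ℝ → ℝ) (hh : Integrable h) (c : ℝ) :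
    Integrable (fun y => h y * (c * Real.arctan y)) ∧
    HasDerivAt (fun μ : ℝ => ∫ y, h y * Real.exp (μ * (c * Real.arctan y)))
      (∫ y, h y * (c * Real.arctan y)) 0 := by
  have hg : ∀ y, |c * Real.arctan y| ≤ |c| * 2 := fun y => by
    rw [abs_mul]; exact mul_le_mul_of_nonneg_left (abs_arctan_le y) (abs_nonneg c)
  have hc : Continuous fun y => c * Real.arctan y := by fun_prop
  have key := hasDerivAt_integral_of_dominated_loc_of_deriv_le (μ := (volume : Measure ℝ))
    (F := fun μ y => h y * Real.exp (μ * (c * Real.arctan y)))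
    (F' := fun μ y => h y * (Real.exp (μ * (c * Real.arctan y)) * (c * Real.arctan y)))
    (x₀ := (0 : ℝ)) (s := Metric.ball 0 1)
    (bound := fun y => ‖h y‖ * (Real.exp (|c| * 2) * (|c| * 2)))
    (Metric.ball_mem_nhds 0 one_pos)
    (Eventually.of_forall fun μ => hh.aestronglyMeasurable.mul
      (Continuous.aestronglyMeasurable (by fun_prop)))
    (by simpa using hh)
    (hh.aestronglyMeasurable.mul (Continuous.aestronglyMeasurable (by fun_prop)))
    (Eventually.of_forall fun y μ hμ => ?_)
    (hh.norm.mul_const _)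
    (Eventually.of_forall fun y μ hμ => ?_)
  · simpa using key
  · rw [norm_mul, norm_mul]
    refine mul_le_mul_of_nonneg_left ?_ (norm_nonneg _)
    refine mul_le_mul ?_ (hg y) (norm_nonneg _) (Real.exp_pos _).le
    rw [Real.norm_eq_abs, abs_of_pos (Real.exp_pos _)]
    apply Real.exp_le_exp.2
    have hμ' : |μ| ≤ 1 := by simpa using (mem_ball_zero_iff.1 hμ).le
    calc μ * (c * Real.arctan y) ≤ |μ * (c * Real.arctan y)| := le_abs_self _
      _ = |μ| * |c * Real.arctan y| := abs_mul _ _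
      _ ≤ 1 * (|c| * 2) := mul_le_mul hμ' (hg y) (abs_nonneg _) zero_le_one
      _ = _ := one_mul _
  · have h1 : HasDerivAt (fun μ : ℝ => μ * (c * Real.arctan y)) (c * Real.arctan y) μ := by
      simpa using (hasDerivAt_id μ).mul_const (c * Real.arctan y)
    exact (h1.exp).const_mul (h y)

lemma rho_scale (ν σa σm μ y : ℝ) (ha : 0 < σa) (hm : 0 < σm) :
    rho0 ν σa σm 1 1 μ (σa / σm * y) =
      Wt ν (σa / σm ^ 2) y * Real.exp (μ * (2 / (σa * σm) * Real.arctan y)) := by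
  unfold rho0 Wt
  rw [← Real.exp_add]
  have e1 : σm ^ 2 / σa ^ 2 * (σa / σm * y) ^ 2 = y ^ 2 := by field_simp
  have e2 : σm * (σa / σm * y) / σa = y := by field_simp
  have e3 : (1 - 1 - ν * σm ^ 2 + σa ^ 2 / σm ^ 2) / σm ^ 2 = -ν + (σa / σm ^ 2) ^ 2 := by
    field_simp; ring
  have e4 : (σa / σm * y) ^ 2 / σm ^ 2 = (σa / σm ^ 2) ^ 2 * y ^ 2 := by field_simp
  rw [e1, e2, e3, e4]
  congr 1
  ring

lemma int_scale (b : ℝ) (hb : 0 < b) (g : ℝ → ℝ) : ∫ x, g x = b * ∫ y, g (b * y) := by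
  rw [Measure.integral_comp_mul_left g b, abs_of_pos (inv_pos.2 hb), smul_eq_mul,
    ← mul_assoc, mul_inv_cancel₀ hb.ne', one_mul]

lemma Wexp_integrable (h : ℝ → ℝ) (hh : Integrable h) (c μ : ℝ) :
    Integrable (fun y => h y * Real.exp (μ * (c * Real.arctan y))) := by
  refine hh.mul_bdd (c := Real.exp (|μ| * (|c| * 2)))
    (Continuous.aestronglyMeasurable (by fun_prop)) (Eventually.of_forall fun y => ?_)
  rw [Real.norm_eq_abs, abs_of_pos (Real.exp_pos _)]
  apply Real.exp_le_exp.2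
  refine (le_abs_self _).trans ?_
  rw [abs_mul, abs_mul]
  have := abs_arctan_le y
  gcongr

lemma Wt_int_lower (ν s : ℝ) (hν : 1 / 2 < ν) (hν1 : ν ≤ 1) (h0 : 0 < s) (hs : s ≤ 1) :
    Real.exp (-2) ≤ ∫ y, Wt ν s y := by
  have h1 : ∫ y in Icc (0 : ℝ) 1, Real.exp (-2) ≤ ∫ y in Icc (0 : ℝ) 1, Wt ν s y := by
    refine setIntegral_mono_on (by simp) (Wt_integrable ν s hν).integrableOn
      measurableSet_Icc fun y hy => ?_
    unfold Wt
    apply Real.exp_le_exp.2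
    have hy2 : y ^ 2 ≤ 1 := by nlinarith [hy.1, hy.2]
    have hl0 : 0 ≤ Real.log (1 + y ^ 2) := Real.log_nonneg (by nlinarith [sq_nonneg y])
    have hl := Real.log_le_sub_one_of_pos (show (0 : ℝ) < 1 + y ^ 2 by positivity)
    have hs2 : s ^ 2 ≤ 1 := by nlinarith
    nlinarith [mul_nonneg (sq_nonneg s) hl0, mul_nonneg (sub_nonneg.2 hν1) hl0,
      mul_le_mul hs2 hy2 (sq_nonneg y) zero_le_one]
  have h2 : ∫ y in Icc (0 : ℝ) 1, Wt ν s y ≤ ∫ y, Wt ν s y :=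
    setIntegral_le_integral (Wt_integrable ν s hν)
      (Eventually.of_forall fun y => (Real.exp_pos _).le)
  simp at h1
  linarith

lemma Fmu_eq (ν σa σm : ℝ) (hν : 1 / 2 < ν) (hν1 : ν ≤ 1) (ha : 0 < σa) (hm : 0 < σm)
    (hs : σa / σm ^ 2 ≤ 1) :
    Fmu' ν σa σm 1 1 = (2 / σa) *
      ((∫ y, (σa / σm ^ 2) * y * Real.arctan y * Wt ν (σa / σm ^ 2) y) /
        ∫ y, Wt ν (σa / σm ^ 2) y) - 1 := by
  have hs0 : 0 < σa / σm ^ 2 := by positivity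
  have hb : 0 < σa / σm := by positivity
  have hbc : σa / σm * (2 / (σa * σm)) = 2 / σa * (σa / σm ^ 2) := by field_simp
  have hF : ∀ μ, F ν σa σm 1 1 μ =
      (∫ x : ℝ, (x - μ) * rho0 ν σa σm 1 1 μ x) / ∫ x : ℝ, rho0 ν σa σm 1 1 μ x :=
    fun μ => rfl
  have hr := fun μ y => rho_scale ν σa σm μ y ha hm
  have hlow := Wt_int_lower ν _ hν hν1 hs0 hs
  have hW := Wt_integrable ν (σa / σm ^ 2) hν
  have hyW := yWt_integrable ν (σa / σm ^ 2) hν hs0 hs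
  generalize σa / σm ^ 2 = s at *
  generalize 2 / (σa * σm) = c at *
  generalize σa / σm = b at *
  have hBpos : 0 < ∫ y, Wt ν s y := lt_of_lt_of_le (Real.exp_pos _) hlow
  obtain ⟨-, hA⟩ := deriv_exp_int _ hyW c
  obtain ⟨-, hB⟩ := deriv_exp_int _ hW c
  have hB0 : ∫ y, Wt ν s y * Real.exp ((0 : ℝ) * (c * Real.arctan y)) = ∫ y, Wt ν s y := by
    simp
  have hA0 : ∫ y, y * Wt ν s y * Real.exp ((0 : ℝ) * (c * Real.arctan y)) = 0 := by
    simp only [zero_mul, Real.exp_zero, mul_one]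
    have h := integral_neg_eq_self (fun y => y * Wt ν s y) (volume : Measure ℝ)
    have h2 : ∀ y, -y * Wt ν s (-y) = -(y * Wt ν s y) := fun y => by simp [Wt]
    simp only [h2, integral_neg] at h
    linarith
  have hq := ((hA.div hB (by rw [hB0]; exact hBpos.ne')).const_mul b).sub (hasDerivAt_id (0 : ℝ))
  have hev : (fun μ => F ν σa σm 1 1 μ) =ᶠ[𝓝 0] fun μ =>
      b * ((∫ y, y * Wt ν s y * Real.exp (μ * (c * Real.arctan y))) /
        ∫ y, Wt ν s y * Real.exp (μ * (c * Real.arctan y))) - μ := by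
    have hne := hB.continuousAt.eventually_ne (y := 0) (by rw [hB0]; exact hBpos.ne')
    filter_upwards [hne] with μ hμ
    rw [hF, int_scale b hb, int_scale b hb (fun x => rho0 ν σa σm 1 1 μ x)]
    simp only [hr]
    have e : ∫ y, (b * y - μ) * (Wt ν s y * Real.exp (μ * (c * Real.arctan y))) =
        b * (∫ y, y * Wt ν s y * Real.exp (μ * (c * Real.arctan y))) -
        μ * ∫ y, Wt ν s y * Real.exp (μ * (c * Real.arctan y)) := by
      rw [← integral_const_mul, ← integral_const_mul, ← integral_sub
        ((Wexp_integrable _ hyW c μ).const_mul b) ((Wexp_integrable _ hW c μ).const_mul μ)]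
      congr 1
      ext y
      ring
    rw [e]
    have hb' := hb.ne'
    generalize (∫ y, Wt ν s y * Real.exp (μ * (c * Real.arctan y))) = D at *
    generalize (∫ y, y * Wt ν s y * Real.exp (μ * (c * Real.arctan y))) = N at *
    field_simp
  have hd := (hq.congr_of_eventuallyEq hev).deriv
  unfold Fmu'
  rw [hd, hA0, hB0]
  have e1 : ∫ y, y * Wt ν s y * (c * Real.arctan y) =
      c * ∫ y, y * Real.arctan y * Wt ν s y := by
    rw [← integral_const_mul]; congr 1; ext y; ring
  have e2 : ∫ y, s * y * Real.arctan y * Wt ν s y =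
      s * ∫ y, y * Real.arctan y * Wt ν s y := by
    rw [← integral_const_mul]; congr 1; ext y; ring
  rw [e1, e2]
  generalize ∫ y, y * Real.arctan y * Wt ν s y = J
  have hB' := hBpos.ne'
  generalize ∫ y, Wt ν s y = D at *
  have e3 : b * ((c * J * D - 0 * ∫ y, Wt ν s y * (c * Real.arctan y)) / D ^ 2)
      = (b * c) * (J / D) := by
    field_simp
    ring
  rw [e3, hbc]
  ring

lemma num_tendsto (ν : ℝ) (hν : 1 / 2 < ν) :
    Tendsto (fun s : ℝ => ∫ y, s * y * Real.arctan y * Wt ν s y) (𝓝 0) (𝓝 0) := by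
  have h := tendsto_integral_filter_of_dominated_convergence (μ := (volume : Measure ℝ))
    (l := 𝓝 (0 : ℝ)) (F := fun s y => s * y * Real.arctan y * Wt ν s y) (f := fun _ => 0)
    (fun y => 2 * (Real.exp 1 * Bd ν y))
    (Eventually.of_forall fun s => Continuous.aestronglyMeasurable (by
      have := Wt_cont ν s
      fun_prop)) ?_ (((Bd_integrable ν hν).const_mul _).const_mul _) ?_
  · simpa using h
  · have : Metric.closedBall (0 : ℝ) 1 ∈ 𝓝 (0 : ℝ) := Metric.closedBall_mem_nhds 0 one_pos
    filter_upwards [this] with s hs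
    have hs' : |s| ≤ 1 := by simpa using hs
    refine Eventually.of_forall fun y => ?_
    have h1 := yWt_le ν s y hs'
    have hw : 0 < Wt ν s y := Real.exp_pos _
    calc ‖s * y * Real.arctan y * Wt ν s y‖ = |Real.arctan y| * (|s * y| * Wt ν s y) := by
          rw [Real.norm_eq_abs, abs_mul, abs_mul _ (Real.arctan y), abs_of_pos hw]; ring
      _ ≤ _ := mul_le_mul (abs_arctan_le y) h1 (by positivity) (by norm_num)
  · refine Eventually.of_forall fun y => ?_
    have hc : Continuous fun s : ℝ => s * y * Real.arctan y * Wt ν s y := by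
      unfold Wt; fun_prop
    simpa using hc.tendsto 0

/-- With a = θ = 1 and ν ∈ (1/2, 1], for every σa > 0 the limit of F'_μ[0] as
σm → ∞ exists and is strictly negative; in particular the system is in the unstable phase for
all sufficiently large multiplicative noise. -/
theorem stmt7 (ν : ℝ) (hν : ν ∈ Set.Ioc (1 / 2 : ℝ) 1) (σa : ℝ) (hσa : 0 < σa) :
    ∃ L : ℝ, L < 0 ∧ Tendsto (fun σm : ℝ => Fmu' ν σa σm 1 1) atTop (nhds L) ∧
      ∀ᶠ σm : ℝ in atTop, Fmu' ν σa σm 1 1 < 0 := by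
  obtain ⟨hν0, hν1⟩ := hν
  have hs : Tendsto (fun σm : ℝ => σa / σm ^ 2) atTop (𝓝 0) :=
    Tendsto.const_div_atTop (tendsto_pow_atTop two_ne_zero) σa
  have hev : ∀ᶠ σm : ℝ in atTop, 0 < σm ∧ σa / σm ^ 2 ≤ 1 :=
    (eventually_gt_atTop 0).and (hs.eventually_le_const one_pos)
  have hnum := (num_tendsto ν hν0).comp hs
  have hratio : Tendsto (fun σm : ℝ =>
      (∫ y, (σa / σm ^ 2) * y * Real.arctan y * Wt ν (σa / σm ^ 2) y) /
        ∫ y, Wt ν (σa / σm ^ 2) y) atTop (𝓝 0) := by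
    have hb : Tendsto (fun σm : ℝ =>
        |∫ y, (σa / σm ^ 2) * y * Real.arctan y * Wt ν (σa / σm ^ 2) y| / Real.exp (-2))
        atTop (𝓝 0) := by
      simpa using hnum.abs.div_const (Real.exp (-2))
    refine squeeze_zero_norm' ?_ hb
    filter_upwards [hev] with σm h
    have hl := Wt_int_lower ν (σa / σm ^ 2) hν0 hν1 (div_pos hσa (pow_pos h.1 2)) h.2
    rw [norm_div, Real.norm_eq_abs, Real.norm_eq_abs]
    exact div_le_div_of_nonneg_left (abs_nonneg _) (Real.exp_pos _) (hl.trans (le_abs_self _))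
  have hlim : Tendsto (fun σm : ℝ => Fmu' ν σa σm 1 1) atTop (𝓝 (-1)) := by
    have h := (hratio.const_mul (2 / σa)).sub_const 1
    rw [mul_zero, zero_sub] at h
    refine h.congr' ?_
    filter_upwards [hev] with σm h
    exact (Fmu_eq ν σa σm hν0 hν1 hσa h.1 h.2).symm
  exact ⟨-1, by norm_num, hlim, hlim.eventually_lt_const (by norm_num)⟩
end

section
/- Fix ν ∈ [0,1], σa > 0 and σm > 0, and suppose a₀ > 0, θ₀ > 0 are such that F'_μ(ν, σa, σm, a₀, θ₀)[0] = 0. Then the partial derivative of (a, θ) ↦ F'_μ(ν, σa, σm, a, θ)[0] with respect to θ at (a₀, θ₀) is strictly positive, and likewise its partial derivative with respect to a at (a₀, θ₀) is strictly positive. -/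
open MeasureTheory Real Set Filter

namespace Aux9

/-- the logarithmic exponent -/
noncomputable def L (r x : ℝ) : ℝ := Real.log (1 + r ^ 2 * x ^ 2)

/-- the symmetric weight -/
noncomputable def w (r p c x : ℝ) : ℝ := Real.exp (c * L r x - p * x ^ 2)

/-- continuous functions of polynomial growth -/
def Adm (r : ℝ) (g : ℝ → ℝ) : Prop :=
  Continuous g ∧ ∃ (K : ℝ) (n : ℕ), ∀ x, |g x| ≤ K * (1 + r ^ 2 * x ^ 2) ^ n

lemma one_le (r x : ℝ) : 1 ≤ 1 + r ^ 2 * x ^ 2 := by nlinarith [sq_nonneg (r * x)]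

lemma L_nonneg (r x : ℝ) : 0 ≤ L r x := Real.log_nonneg (one_le r x)

lemma L_le (r x : ℝ) : L r x ≤ r ^ 2 * x ^ 2 := by
  have := Real.log_le_sub_one_of_pos (lt_of_lt_of_le one_pos (one_le r x))
  unfold L; linarith

lemma L_cont (r : ℝ) : Continuous (L r) := by
  unfold L
  refine Continuous.log (by fun_prop) (fun x => ?_)
  have := one_le r x
  positivity

lemma w_cont (r p c : ℝ) : Continuous (w r p c) := by
  have := L_cont r
  unfold w; fun_prop

lemma w_pos (r p c x : ℝ) : 0 < w r p c x := Real.exp_pos _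

lemma Adm.mul {r : ℝ} {g h : ℝ → ℝ} (hg : Adm r g) (hh : Adm r h) :
    Adm r (fun x => g x * h x) := by
  obtain ⟨cg, K, n, hK⟩ := hg
  obtain ⟨ch, M, m, hM⟩ := hh
  refine ⟨cg.mul ch, K * M, n + m, fun x => ?_⟩
  rw [abs_mul]
  calc |g x| * |h x| ≤ (K * (1 + r ^ 2 * x ^ 2) ^ n) * (M * (1 + r ^ 2 * x ^ 2) ^ m) :=
        mul_le_mul (hK x) (hM x) (abs_nonneg _) ((abs_nonneg _).trans (hK x))
    _ = _ := by rw [pow_add]; ring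

lemma adm_const (r k : ℝ) : Adm r (fun _ => k) :=
  ⟨continuous_const, |k|, 0, fun x => by simp⟩

lemma adm_id {r : ℝ} (hr : 0 < r) : Adm r (fun x => x) := by
  refine ⟨continuous_id, 1 / r, 1, fun x => ?_⟩
  rw [pow_one, div_mul_eq_mul_div, le_div_iff₀ hr, one_mul]
  have : r ^ 2 * x ^ 2 = (|x| * r) ^ 2 := by rw [mul_pow, sq_abs]; ring
  rw [this]
  nlinarith [sq_nonneg (|x| * r - 1)]

lemma abs_arctan_le (y : ℝ) : |Real.arctan y| ≤ 2 := by
  rw [abs_le]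
  have := Real.arctan_lt_pi_div_two y
  have := Real.neg_pi_div_two_lt_arctan y
  have := Real.pi_lt_four
  constructor <;> linarith

lemma adm_A (r : ℝ) : Adm r (fun x => Real.arctan (r * x)) :=
  ⟨by fun_prop, 2, 0, fun x => by simpa using abs_arctan_le _⟩

lemma adm_L (r : ℝ) : Adm r (L r) :=
  ⟨L_cont r, 1, 1, fun x => by
    rw [abs_of_nonneg (L_nonneg r x)]; have := L_le r x; linarith⟩

lemma adm_of_le {r : ℝ} {h : ℝ → ℝ} (hc : Continuous h) (hh : ∀ x, |h x| ≤ L r x + 2) :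
    Adm r h :=
  ⟨hc, 2, 1, fun x => by
    have := L_le r x; have := hh x; have := one_le r x; linarith⟩

lemma integrable_adm {r p : ℝ} (hr : 0 < r) (hp : 0 < p) (c : ℝ) {g : ℝ → ℝ} (hg : Adm r g) :
    Integrable (fun x => g x * w r p c x) := by
  obtain ⟨cg, K, n, hK⟩ := hg
  obtain ⟨m, hm⟩ := exists_nat_ge c
  set ε : ℝ := p / (2 * r ^ 2) with hε
  have hε0 : 0 < ε := by positivity
  have hεr : ε * r ^ 2 = p / 2 := by rw [hε]; field_simp
  have hK0 : 0 ≤ K := by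
    have := (abs_nonneg _).trans (hK 0)
    simpa using this
  have hint := (integrable_exp_neg_mul_sq (b := p / 2) (by positivity)).const_mul
    (K * (((n + m).factorial : ℝ) / ε ^ (n + m) * Real.exp ε))
  refine hint.mono' (cg.mul (w_cont r p c)).aestronglyMeasurable (ae_of_all _ fun x => ?_)
  have h1 := one_le r x
  have h0 : 0 < 1 + r ^ 2 * x ^ 2 := by linarith
  have hw : w r p c x ≤ (1 + r ^ 2 * x ^ 2) ^ m * Real.exp (-p * x ^ 2) := by
    have : (1 + r ^ 2 * x ^ 2) ^ m = Real.exp (m * L r x) := by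
      rw [Real.exp_nat_mul, L, Real.exp_log h0]
    rw [this, ← Real.exp_add, w]
    apply Real.exp_le_exp.2
    have := mul_le_mul_of_nonneg_right hm (L_nonneg r x)
    linarith
  have hpow : (1 + r ^ 2 * x ^ 2) ^ (n + m) ≤
      ((n + m).factorial : ℝ) / ε ^ (n + m) * Real.exp (ε * (1 + r ^ 2 * x ^ 2)) := by
    have := Real.pow_div_factorial_le_exp (ε * (1 + r ^ 2 * x ^ 2)) (by positivity) (n + m)
    rw [div_le_iff₀ (by positivity), mul_pow] at this
    rw [div_mul_eq_mul_div, le_div_iff₀ (by positivity)]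
    linarith
  rw [Real.norm_eq_abs, abs_mul, abs_of_pos (w_pos r p c x)]
  calc |g x| * w r p c x
      ≤ (K * (1 + r ^ 2 * x ^ 2) ^ n) * ((1 + r ^ 2 * x ^ 2) ^ m * Real.exp (-p * x ^ 2)) :=
        mul_le_mul (hK x) hw (w_pos _ _ _ _).le (by positivity)
    _ = K * (1 + r ^ 2 * x ^ 2) ^ (n + m) * Real.exp (-p * x ^ 2) := by rw [pow_add]; ring
    _ ≤ K * (((n + m).factorial : ℝ) / ε ^ (n + m) * Real.exp (ε * (1 + r ^ 2 * x ^ 2)))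
          * Real.exp (-p * x ^ 2) := by gcongr
    _ = K * (((n + m).factorial : ℝ) / ε ^ (n + m) * Real.exp ε) * Real.exp (-(p / 2) * x ^ 2) := by
        have : Real.exp (ε * (1 + r ^ 2 * x ^ 2)) * Real.exp (-p * x ^ 2)
            = Real.exp ε * Real.exp (-(p / 2) * x ^ 2) := by
          rw [← Real.exp_add, ← Real.exp_add]
          congr 1
          linear_combination x ^ 2 * hεr
        linear_combination (K * (((n + m).factorial : ℝ) / ε ^ (n + m))) * this

lemma hasDeriv_tilt {r p : ℝ} (hr : 0 < r) (hp : 0 < p) (c : ℝ) {g h : ℝ → ℝ} (hg : Adm r g)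
    (hc : Continuous h) (hh : ∀ x, |h x| ≤ L r x + 2) :
    HasDerivAt (fun t => ∫ x, g x * Real.exp (t * h x) * w r p c x)
      (∫ x, g x * h x * w r p c x) 0 := by
  have hgc := hg.1
  have hwc := w_cont r p c
  have hbint : Integrable (fun x => |g x * h x| * Real.exp 2 * w r p (c + 1) x) := by
    have := ((integrable_adm hr hp (c + 1) (hg.mul (adm_of_le hc hh))).abs).const_mul (Real.exp 2)
    refine this.congr (ae_of_all _ fun x => ?_)
    simp only [abs_mul, abs_of_pos (w_pos r p (c + 1) x)]
    ring
  have := (hasDerivAt_integral_of_dominated_loc_of_deriv_le (μ := volume)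
    (F := fun t x => g x * Real.exp (t * h x) * w r p c x)
    (F' := fun t x => g x * (Real.exp (t * h x) * h x) * w r p c x) (x₀ := 0)
    (s := Metric.ball 0 1)
    (bound := fun x => |g x * h x| * Real.exp 2 * w r p (c + 1) x)
    (Metric.ball_mem_nhds _ one_pos)
    (Eventually.of_forall fun t => by
      exact Continuous.aestronglyMeasurable (by fun_prop))
    (by simpa using integrable_adm hr hp c hg)
    (Continuous.aestronglyMeasurable (by fun_prop))
    (ae_of_all _ fun x t ht => ?_) hbint (ae_of_all _ fun x t ht => ?_)).2
  · simpa using this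
  · have ht1 : |t| ≤ 1 := by
      simpa using (mem_ball_zero_iff.1 ht).le
    have hth : t * h x ≤ L r x + 2 := by
      calc t * h x ≤ |t * h x| := le_abs_self _
        _ = |t| * |h x| := abs_mul _ _
        _ ≤ 1 * (L r x + 2) := mul_le_mul ht1 (hh x) (abs_nonneg _) zero_le_one
        _ = _ := one_mul _
    have e : Real.exp (t * h x) * w r p c x ≤ Real.exp 2 * w r p (c + 1) x := by
      rw [w, w, ← Real.exp_add, ← Real.exp_add]
      apply Real.exp_le_exp.2
      linarith
    rw [Real.norm_eq_abs]
    calc |g x * (Real.exp (t * h x) * h x) * w r p c x|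
        = |g x * h x| * (Real.exp (t * h x) * w r p c x) := by
          rw [abs_mul, abs_mul, abs_mul, abs_mul, abs_of_pos (w_pos _ _ _ _), Real.abs_exp]; ring
      _ ≤ |g x * h x| * (Real.exp 2 * w r p (c + 1) x) := by gcongr
      _ = _ := by ring
  · have h1 : HasDerivAt (fun t => t * h x) (h x) t := by
      simpa using (hasDerivAt_id t).mul_const (h x)
    exact ((h1.exp).const_mul (g x)).mul_const _

lemma hasDeriv_c {r p : ℝ} (hr : 0 < r) (hp : 0 < p) (c : ℝ) {g : ℝ → ℝ} (hg : Adm r g) :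
    HasDerivAt (fun c => ∫ x, g x * w r p c x) (∫ x, g x * L r x * w r p c x) c := by
  have h := hasDeriv_tilt hr hp c hg (L_cont r)
    (fun x => by rw [abs_of_nonneg (L_nonneg r x)]; linarith)
  have h2 := HasDerivAt.comp_sub_const (x := c) (a := c)
    (f := fun t => ∫ x, g x * Real.exp (t * L r x) * w r p c x) (by simpa using h)
  refine h2.congr_of_eventuallyEq (Eventually.of_forall fun c' => ?_)
  refine integral_congr_ae (ae_of_all _ fun x => ?_)
  simp only [w, mul_assoc, ← Real.exp_add]
  congr 2
  ring

lemma ibp {r p : ℝ} (hr : 0 < r) (hp : 0 < p) (c : ℝ) :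
    r * (∫ x, 1 * w r p c x) = (2 * p - 2 * c * r ^ 2 - 2 * r ^ 2) *
      (∫ x, x * Real.arctan (r * x) * w r p c x)
      + 2 * p * r ^ 2 * ∫ x, x * Real.arctan (r * x) * (x * x) * w r p c x := by
  have a0 := adm_const r 1
  have a1 := (adm_id hr).mul (adm_A r)
  have a3 := a1.mul ((adm_id hr).mul (adm_id hr))
  have i0 := integrable_adm hr hp c a0
  have i1 := integrable_adm hr hp c a1
  have i3 := integrable_adm hr hp c a3
  have iA := integrable_adm hr hp c (adm_A r)
  have ixA := integrable_adm hr hp c ((adm_A r).mul ((adm_id hr).mul (adm_id hr)))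
  have iF : Integrable (fun x => (1 + r ^ 2 * x ^ 2) * Real.arctan (r * x) * w r p c x) := by
    refine (iA.add (ixA.const_mul (r ^ 2))).congr (ae_of_all _ fun x => ?_)
    simp only [Pi.add_apply]; ring
  have iF' := (i0.const_mul r).sub ((i1.const_mul (2 * p - 2 * c * r ^ 2 - 2 * r ^ 2)).add
    (i3.const_mul (2 * p * r ^ 2)))
  have key := integral_eq_zero_of_hasDerivAt_of_integrable (fun x => ?_) iF' iF
  · rw [integral_sub' (i0.const_mul r) ((i1.const_mul _).add (i3.const_mul _)),
      integral_add' (i1.const_mul _) (i3.const_mul _), integral_const_mul r,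
      integral_const_mul (2 * p - 2 * c * r ^ 2 - 2 * r ^ 2),
      integral_const_mul (2 * p * r ^ 2)] at key
    linarith
  · have h0 : 1 + r ^ 2 * x ^ 2 ≠ 0 := by have := one_le r x; positivity
    have hx2 : HasDerivAt (fun x : ℝ => x ^ 2) (2 * x) x := by
      simpa using hasDerivAt_pow 2 x
    have hq : HasDerivAt (fun x : ℝ => 1 + r ^ 2 * x ^ 2) (r ^ 2 * (2 * x)) x :=
      (hx2.const_mul _).const_add 1
    have hA : HasDerivAt (fun x : ℝ => Real.arctan (r * x)) (1 / (1 + (r * x) ^ 2) * r) x := by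
      have : HasDerivAt (fun x : ℝ => r * x) r x := by
        simpa using (hasDerivAt_id x).const_mul r
      exact this.arctan
    have hw : HasDerivAt (w r p c) (w r p c x *
        (c * (r ^ 2 * (2 * x) / (1 + r ^ 2 * x ^ 2)) - p * (2 * x))) x :=
      (((hq.log h0).const_mul c).sub (hx2.const_mul p)).exp
    refine ((hq.mul hA).mul hw).congr_deriv ?_
    simp only [Pi.sub_apply, Pi.add_apply, Pi.mul_apply]
    rw [mul_pow]
    field_simp
    ring

lemma cheb {r p : ℝ} (hr : 0 < r) (hp : 0 < p) (c : ℝ) {f g m : ℝ → ℝ}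
    (hf : Adm r f) (hg : Adm r g) (hm : Adm r m) (hm0 : ∀ x, 0 ≤ m x) (hm1 : ∀ x, x ≠ 0 → 0 < m x)
    (fe : ∀ x, f |x| = f x) (ge : ∀ x, g |x| = g x)
    (fm : StrictMonoOn f (Ici 0)) (gm : StrictMonoOn g (Ici 0))
    (hs : ∀ y, 0 ≤ y → ∃ x, 0 ≤ x ∧ f x = y) (hf0 : ∀ x, 0 ≤ f x) :
    (∫ x, m x * f x * w r p c x) * (∫ x, m x * g x * w r p c x) <
      (∫ x, m x * w r p c x) * (∫ x, m x * (f x * g x) * w r p c x) := by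
  have im := integrable_adm hr hp c hm
  have imf := integrable_adm hr hp c (hm.mul hf)
  have img := integrable_adm hr hp c (hm.mul hg)
  have imfg := integrable_adm hr hp c (hm.mul (hf.mul hg))
  have pm : 0 < ∫ x, m x * w r p c x :=
    integral_pos_of_integrable_nonneg_nonzero (x := 1) (hm.1.mul (w_cont r p c)) im
      (fun x => mul_nonneg (hm0 x) (w_pos _ _ _ _).le)
      (mul_pos (hm1 1 one_ne_zero) (w_pos _ _ _ _)).ne'
  obtain ⟨x₀, hx₀, hfx⟩ := hs ((∫ x, m x * f x * w r p c x) / ∫ x, m x * w r p c x)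
    (div_nonneg (integral_nonneg fun x =>
      mul_nonneg (mul_nonneg (hm0 x) (hf0 x)) (w_pos _ _ _ _).le) pm.le)
  rw [eq_div_iff pm.ne'] at hfx
  have pos : 0 < ∫ x, m x * ((f x - f x₀) * (g x - g x₀)) * w r p c x := by
    have hfc := hf.1
    have hgc := hg.1
    have hmc := hm.1
    have hwc := w_cont r p c
    refine integral_pos_of_integrable_nonneg_nonzero (x := x₀ + 1) (by fun_prop) ?_ ?_ ?_
    · refine (((imfg.sub (img.const_mul (f x₀))).sub (imf.const_mul (g x₀))).add
        (im.const_mul (f x₀ * g x₀))).congr (ae_of_all _ fun x => ?_)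
      simp only [Pi.sub_apply, Pi.add_apply]; ring
    · intro x
      refine mul_nonneg (mul_nonneg (hm0 x) ?_) (w_pos _ _ _ _).le
      rw [← fe x, ← ge x]
      rcases le_total |x| x₀ with h | h
      · exact mul_nonneg_of_nonpos_of_nonpos
          (sub_nonpos.2 (fm.monotoneOn (abs_nonneg x) hx₀ h))
          (sub_nonpos.2 (gm.monotoneOn (abs_nonneg x) hx₀ h))
      · exact mul_nonneg
          (sub_nonneg.2 (fm.monotoneOn hx₀ (abs_nonneg x) h))
          (sub_nonneg.2 (gm.monotoneOn hx₀ (abs_nonneg x) h))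
    · have h1 : (0 : ℝ) < x₀ + 1 := by linarith
      have h2 : x₀ < x₀ + 1 := by linarith
      exact (mul_pos (mul_pos (hm1 _ h1.ne') (mul_pos (sub_pos.2 (fm hx₀ h1.le h2))
        (sub_pos.2 (gm hx₀ h1.le h2)))) (w_pos _ _ _ _)).ne'
  have eq : (∫ x, m x * ((f x - f x₀) * (g x - g x₀)) * w r p c x) =
      (∫ x, m x * (f x * g x) * w r p c x) - f x₀ * (∫ x, m x * g x * w r p c x)
      - g x₀ * (∫ x, m x * f x * w r p c x) + (f x₀ * g x₀) * ∫ x, m x * w r p c x := by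
    have h := integral_add' ((imfg.sub (img.const_mul (f x₀))).sub (imf.const_mul (g x₀)))
      (im.const_mul (f x₀ * g x₀))
    rw [integral_sub' (imfg.sub (img.const_mul (f x₀))) (imf.const_mul (g x₀)),
      integral_sub' imfg (img.const_mul (f x₀)), integral_const_mul (f x₀),
      integral_const_mul (g x₀), integral_const_mul (f x₀ * g x₀)] at h
    rw [← h]
    refine integral_congr_ae (ae_of_all _ fun x => ?_)
    simp only [Pi.sub_apply, Pi.add_apply]; ring
  rw [eq] at pos
  have := mul_pos pm pos
  rw [← hfx] at this ⊢
  nlinarith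

lemma L_strict {r : ℝ} (hr : 0 < r) : StrictMonoOn (L r) (Ici 0) := by
  intro x hx y hy hxy
  have h1 := one_le r x
  have hx : 0 ≤ x := hx
  exact Real.log_lt_log (by linarith) (by gcongr)

lemma sq_strict : StrictMonoOn (fun x : ℝ => x * x) (Ici 0) := by
  intro x hx y hy hxy
  have hx : 0 ≤ x := hx
  simp only
  nlinarith

lemma xA_strict {r : ℝ} (hr : 0 < r) :
    StrictMonoOn (fun x : ℝ => x * Real.arctan (r * x)) (Ici 0) := by
  intro x hx y hy hxy
  have hx : 0 ≤ x := hx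
  have h0 : 0 ≤ Real.arctan (r * x) := Real.arctan_nonneg.2 (by positivity)
  have h1 : Real.arctan (r * x) < Real.arctan (r * y) :=
    Real.arctan_strictMono (by gcongr)
  simp only
  nlinarith

lemma L_abs (r x : ℝ) : L r |x| = L r x := by simp [L]

lemma xA_abs (r x : ℝ) : |x| * Real.arctan (r * |x|) = x * Real.arctan (r * x) := by
  rcases abs_choice x with h | h <;> rw [h]
  rw [mul_neg, Real.arctan_neg]; ring

lemma xA_pos {r : ℝ} (hr : 0 < r) {x : ℝ} (hx : x ≠ 0) : 0 < x * Real.arctan (r * x) := by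
  rw [← xA_abs]
  have : 0 < |x| := abs_pos.2 hx
  exact mul_pos this (Real.arctan_pos.2 (by positivity))

lemma xA_nonneg {r : ℝ} (hr : 0 < r) (x : ℝ) : 0 ≤ x * Real.arctan (r * x) := by
  by_cases hx : x = 0
  · simp [hx]
  · exact (xA_pos hr hx).le

lemma L_surj {r : ℝ} (hr : 0 < r) (y : ℝ) (hy : 0 ≤ y) : ∃ x, 0 ≤ x ∧ L r x = y := by
  refine ⟨√((Real.exp y - 1) / r ^ 2), Real.sqrt_nonneg _, ?_⟩
  have : 0 ≤ Real.exp y - 1 := by linarith [Real.add_one_le_exp y]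
  rw [L, Real.sq_sqrt (by positivity)]
  rw [mul_div_cancel₀ _ (by positivity)]
  simp

/-- mean of `x arctan (r x)` -/
noncomputable def Phi (r p c : ℝ) : ℝ :=
  (∫ x, x * Real.arctan (r * x) * w r p c x) / ∫ x, 1 * w r p c x

lemma N0_pos {r p : ℝ} (hr : 0 < r) (hp : 0 < p) (c : ℝ) : 0 < ∫ x, 1 * w r p c x :=
  integral_pos_of_integrable_nonneg_nonzero (x := 1) (continuous_const.mul (w_cont r p c))
    (integrable_adm hr hp c (adm_const r 1))
    (fun x => mul_nonneg zero_le_one (w_pos _ _ _ _).le)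
    (mul_pos one_pos (w_pos _ _ _ _)).ne'

lemma N1_pos {r p : ℝ} (hr : 0 < r) (hp : 0 < p) (c : ℝ) :
    0 < ∫ x, x * Real.arctan (r * x) * w r p c x :=
  integral_pos_of_integrable_nonneg_nonzero (x := 1)
    (((adm_id hr).mul (adm_A r)).1.mul (w_cont r p c))
    (integrable_adm hr hp c ((adm_id hr).mul (adm_A r)))
    (fun x => mul_nonneg (xA_nonneg hr x) (w_pos _ _ _ _).le)
    (mul_pos (xA_pos hr one_ne_zero) (w_pos _ _ _ _)).ne'

lemma Phi_deriv {r p : ℝ} (hr : 0 < r) (hp : 0 < p) (c : ℝ) :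
    ∃ D, HasDerivAt (Phi r p) D c ∧ 0 < D ∧ r * D < 2 * r ^ 2 * Phi r p c ^ 2 := by
  have a0 := adm_const r 1
  have a1 := (adm_id hr).mul (adm_A r)
  have a2 := (adm_id hr).mul (adm_id hr)
  have a3 := a1.mul a2
  have d0 := hasDeriv_c hr hp c a0
  have d1 := hasDeriv_c hr hp c a1
  have d3 := hasDeriv_c hr hp c a3
  have p0 := N0_pos hr hp c
  have p1 := N1_pos hr hp c
  have c1 := cheb hr hp c (adm_L r) a1 a0 (by simp) (by simp) (L_abs r) (xA_abs r) (L_strict hr)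
    (xA_strict hr) (L_surj hr) (L_nonneg r)
  have c2 := cheb hr hp c a2 (adm_L r) a1 (xA_nonneg hr) (fun _ => xA_pos hr)
    (by simp) (L_abs r) sq_strict (L_strict hr)
    (fun y hy => ⟨√y, Real.sqrt_nonneg _, Real.mul_self_sqrt hy⟩) (fun x => mul_self_nonneg x)
  have dR := ((((hasDerivAt_id c).const_mul 2).mul_const (r ^ 2)).const_sub (2 * p)
    |>.sub_const (2 * r ^ 2) |>.mul d1).add (d3.const_mul (2 * p * r ^ 2))
  have dL := d0.const_mul r
  have e0 := ibp hr hp c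
  have e1 := dL.unique (dR.congr_of_eventuallyEq (Eventually.of_forall fun c' => by
    simpa using ibp hr hp c'))
  have q1 : (∫ x, 1 * (x * Real.arctan (r * x)) * w r p c x) =
      ∫ x, x * Real.arctan (r * x) * w r p c x := by simp only [one_mul]
  have q2 : (∫ x, 1 * (L r x * (x * Real.arctan (r * x))) * w r p c x) =
      ∫ x, x * Real.arctan (r * x) * L r x * w r p c x := by
    congr 1; funext x; ring
  have q3 : (∫ x, x * Real.arctan (r * x) * (x * x * L r x) * w r p c x) =
      ∫ x, x * Real.arctan (r * x) * (x * x) * L r x * w r p c x := by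
    congr 1; funext x; ring
  rw [q1, q2] at c1
  rw [q3] at c2
  refine ⟨_, d1.div d0 p0.ne', ?_, ?_⟩
  · apply div_pos _ (by positivity)
    linarith
  · rw [Phi, div_pow, ← mul_div_assoc, ← mul_div_assoc]
    refine div_lt_div_of_pos_right ?_ (by positivity)
    simp only [id] at e1
    generalize (∫ x, 1 * w r p c x) = N0 at *
    generalize (∫ x, 1 * L r x * w r p c x) = N0' at *
    generalize (∫ x, x * Real.arctan (r * x) * w r p c x) = N1 at *
    generalize (∫ x, x * Real.arctan (r * x) * L r x * w r p c x) = N1' at *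
    generalize (∫ x, x * Real.arctan (r * x) * (x * x) * w r p c x) = N3 at *
    generalize (∫ x, x * Real.arctan (r * x) * (x * x) * L r x * w r p c x) = N3' at *
    have hpr : 0 < 2 * p * r ^ 2 := by positivity
    have k := mul_lt_mul_of_pos_left c2 hpr
    have e : r * (N1' * N0 - N1 * N0') = 2 * r ^ 2 * N1 ^ 2 +
        2 * p * r ^ 2 * (N3 * N1' - N1 * N3') := by
      linear_combination N1' * e0 - N1 * e1
    rw [e]
    linarith

lemma rho_eq (σa σm ν a θ μ x : ℝ) :
    rho0 ν σa σm a θ μ x =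
      Real.exp ((2 * θ / (σa * σm) * μ) * Real.arctan (σm / σa * x)) *
      w (σm / σa) (1 / σm ^ 2) ((a - θ - ν * σm ^ 2 + σa ^ 2 / σm ^ 2) / σm ^ 2) x := by
  have h1 : σm * x / σa = σm / σa * x := by ring
  rw [rho0, w, L, ← Real.exp_add, h1, div_pow]
  congr 1
  ring

lemma Fmu_eq {σa σm : ℝ} (hσa : 0 < σa) (hσm : 0 < σm) (ν a θ : ℝ) :
    Fmu' ν σa σm a θ = 2 * θ / (σa * σm) *
      Phi (σm / σa) (1 / σm ^ 2) ((a - θ - ν * σm ^ 2 + σa ^ 2 / σm ^ 2) / σm ^ 2) - 1 := by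
  have hr : 0 < σm / σa := by positivity
  have hp : 0 < 1 / σm ^ 2 := by positivity
  have hrho := rho_eq σa σm ν a θ
  set r := σm / σa
  set p := 1 / σm ^ 2
  set c := (a - θ - ν * σm ^ 2 + σa ^ 2 / σm ^ 2) / σm ^ 2
  set B := 2 * θ / (σa * σm)
  have hA : ∀ x, |Real.arctan (r * x)| ≤ L r x + 2 := fun x => by
    have := abs_arctan_le (r * x); have := L_nonneg r x; linarith
  have hAc : Continuous fun x => Real.arctan (r * x) := by fun_prop
  have hB : HasDerivAt (fun μ : ℝ => B * μ) B 0 := by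
    simpa using (hasDerivAt_id (0 : ℝ)).const_mul B
  have dX := HasDerivAt.comp (0 : ℝ) (h := fun μ : ℝ => B * μ)
    (by simpa using hasDeriv_tilt hr hp c (adm_id hr) hAc hA) hB
  have dZ := HasDerivAt.comp (0 : ℝ) (h := fun μ : ℝ => B * μ)
    (by simpa using hasDeriv_tilt hr hp c (adm_const r 1) hAc hA) hB
  have p0 := N0_pos hr hp c
  have hX0 : (∫ x, x * w r p c x) = 0 := by
    have h := integral_neg_eq_self (fun x => x * w r p c x) volume
    have h2 : (∫ x, -x * w r p c (-x)) = - ∫ x, x * w r p c x := by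
      rw [← integral_neg]
      congr 1; funext x; simp [w, L]
    rw [h2] at h
    linarith
  have hXZ : ∀ μ, F ν σa σm a θ μ =
      (∫ x, x * Real.exp (B * μ * Real.arctan (r * x)) * w r p c x) /
      (∫ x, 1 * Real.exp (B * μ * Real.arctan (r * x)) * w r p c x) - μ := by
    intro μ
    have hE : Adm r (fun x => Real.exp (B * μ * Real.arctan (r * x))) := by
      refine ⟨by fun_prop, Real.exp (|B * μ| * 2), 0, fun x => ?_⟩
      rw [Real.abs_exp, pow_zero, mul_one]
      apply Real.exp_le_exp.2
      calc B * μ * Real.arctan (r * x) ≤ |B * μ * Real.arctan (r * x)| := le_abs_self _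
        _ = |B * μ| * |Real.arctan (r * x)| := abs_mul _ _
        _ ≤ |B * μ| * 2 := by gcongr; exact abs_arctan_le _
    have iX := integrable_adm hr hp c ((adm_id hr).mul hE)
    have iZ := integrable_adm hr hp c ((adm_const r 1).mul hE)
    have pZ : 0 < ∫ x, 1 * Real.exp (B * μ * Real.arctan (r * x)) * w r p c x :=
      integral_pos_of_integrable_nonneg_nonzero (x := 1)
        (((adm_const r 1).mul hE).1.mul (w_cont r p c)) iZ
        (fun x => mul_nonneg (by positivity) (w_pos _ _ _ _).le)
        (mul_pos (by positivity) (w_pos _ _ _ _)).ne'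
    have eZ : Z ν σa σm a θ μ =
        ∫ x, 1 * Real.exp (B * μ * Real.arctan (r * x)) * w r p c x := by
      rw [Z]; congr 1; funext x; rw [hrho, one_mul]
    have eN : (∫ x, (x - μ) * rho0 ν σa σm a θ μ x) =
        (∫ x, x * Real.exp (B * μ * Real.arctan (r * x)) * w r p c x) -
        μ * ∫ x, 1 * Real.exp (B * μ * Real.arctan (r * x)) * w r p c x := by
      rw [← integral_const_mul, ← integral_sub iX (iZ.const_mul μ)]
      congr 1; funext x; rw [hrho]; ring
    rw [F, eN, eZ, sub_div, mul_div_cancel_right₀ _ pZ.ne']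
  have hd := ((dX.div dZ (by simpa using p0.ne')).sub (hasDerivAt_id (0 : ℝ))).congr_of_eventuallyEq
    (f₁ := fun μ => F ν σa σm a θ μ) (Eventually.of_forall fun μ => by
      simpa using hXZ μ)
  rw [Fmu', hd.deriv]
  simp only [Function.comp, mul_zero, zero_mul, Real.exp_zero, mul_one, hX0, sub_zero, Phi]
  rw [pow_two, mul_div_mul_right _ _ p0.ne']
  ring

end Aux9

theorem stmt9 (ν σa σm a₀ θ₀ : ℝ) (hν : ν ∈ Set.Icc (0 : ℝ) 1) (hσa : 0 < σa) (hσm : 0 < σm)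
    (ha₀ : 0 < a₀) (hθ₀ : 0 < θ₀) (hroot : Fmu' ν σa σm a₀ θ₀ = 0) :
    0 < deriv (fun θ : ℝ => Fmu' ν σa σm a₀ θ) θ₀ ∧
    0 < deriv (fun a : ℝ => Fmu' ν σa σm a θ₀) a₀ := by
  have hr : 0 < σm / σa := by positivity
  have hp : 0 < 1 / σm ^ 2 := by positivity
  simp only [Aux9.Fmu_eq hσa hσm] at hroot ⊢
  obtain ⟨D, hD, hD0, hD1⟩ := Aux9.Phi_deriv hr hp
    ((a₀ - θ₀ - ν * σm ^ 2 + σa ^ 2 / σm ^ 2) / σm ^ 2)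
  constructor
  · have hc : HasDerivAt (fun θ => (a₀ - θ - ν * σm ^ 2 + σa ^ 2 / σm ^ 2) / σm ^ 2)
        (-1 / σm ^ 2) θ₀ :=
      ((((hasDerivAt_id θ₀).const_sub a₀).sub_const _).add_const _).div_const _
    have hl : HasDerivAt (fun θ => 2 * θ / (σa * σm)) (2 * 1 / (σa * σm)) θ₀ :=
      ((hasDerivAt_id θ₀).const_mul 2).div_const _
    have h := (hl.mul (hD.comp θ₀ hc)).sub_const 1
    have h2 := h.deriv
    simp only [Function.comp, Pi.mul_apply] at h2
    refine lt_of_lt_of_eq ?_ h2.symm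
    generalize Aux9.Phi (σm / σa) (1 / σm ^ 2)
      ((a₀ - θ₀ - ν * σm ^ 2 + σa ^ 2 / σm ^ 2) / σm ^ 2) = P at *
    have hP : 2 * θ₀ * P = σa * σm := by
      field_simp at hroot
      linarith
    have hD2 : σa * D < 2 * σm * P ^ 2 := by
      have e1 : σm / σa * D = σm / σa ^ 2 * (σa * D) := by field_simp
      have e2 : 2 * (σm / σa) ^ 2 * P ^ 2 = σm / σa ^ 2 * (2 * σm * P ^ 2) := by field_simp
      rw [e1, e2] at hD1
      exact lt_of_mul_lt_mul_left hD1 (by positivity)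
    have e : 2 * 1 / (σa * σm) * P + 2 * θ₀ / (σa * σm) * (D * (-1 / σm ^ 2)) =
        2 / (σa * σm ^ 3) * (P * σm ^ 2 - θ₀ * D) := by
      field_simp
      ring
    rw [e]
    refine mul_pos (by positivity) ?_
    have : 0 < σa * (P * σm ^ 2 - θ₀ * D) := by
      have h3 := mul_lt_mul_of_pos_left hD2 hθ₀
      have h4 : θ₀ * (2 * σm * P ^ 2) = σa * σm ^ 2 * P := by
        linear_combination σm * P * hP
      linarith
    exact pos_of_mul_pos_right this hσa.le
  · have hc : HasDerivAt (fun a => (a - θ₀ - ν * σm ^ 2 + σa ^ 2 / σm ^ 2) / σm ^ 2)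
        (1 / σm ^ 2) a₀ :=
      ((((hasDerivAt_id a₀).sub_const θ₀).sub_const _).add_const _).div_const _
    have h := ((hD.comp a₀ hc).const_mul (2 * θ₀ / (σa * σm))).sub_const 1
    have h2 := h.deriv
    simp only [Function.comp] at h2
    refine lt_of_lt_of_eq ?_ h2.symm
    positivity
end

section
/- Fix a ∈ ℝ, θ > 0, σa > 0, σm > 0, ν ∈ [0,1] and μ ∈ ℝ. Then the density ρ0[μ] satisfies the stationary (zero-flux) Fokker–Planck equation: for every x ∈ ℝ, (a·x − x³ + (1−ν)·σm²·x + θ·(μ − x))·ρ0[μ](x) = d/dx [ (1/2)·(σm²·x² + σa²)·ρ0[μ](x) ]. -/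
open MeasureTheory Real Set Filter

/-- ρ0[μ] satisfies the stationary (zero-flux) Fokker–Planck equation: the
Itô-corrected drift times ρ0 equals the derivative of half the squared diffusion times ρ0. -/
theorem stmt11 (a θ σa σm ν μ : ℝ) (hθ : 0 < θ) (hσa : 0 < σa) (hσm : 0 < σm)
    (hν : ν ∈ Set.Icc (0 : ℝ) 1) :
    ∀ x : ℝ,
      (a * x - x ^ 3 + (1 - ν) * σm ^ 2 * x + θ * (μ - x)) * rho0 ν σa σm a θ μ x =
        deriv (fun y : ℝ => (1 / 2) * (σm ^ 2 * y ^ 2 + σa ^ 2) * rho0 ν σa σm a θ μ y) x := by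
  intro x
  have hm : σm ≠ 0 := hσm.ne'
  have ha : σa ≠ 0 := hσa.ne'
  have hD : σa ^ 2 + σm ^ 2 * x ^ 2 ≠ 0 := by positivity
  have hL : 1 + (σm ^ 2 / σa ^ 2) * x ^ 2 ≠ 0 := by positivity
  have hA : 1 + (σm * x / σa) ^ 2 ≠ 0 := by positivity
  have hsq : HasDerivAt (fun y : ℝ => y ^ 2) (2 * x) x := by
    simpa using hasDerivAt_pow 2 x
  have h1 : HasDerivAt (fun y : ℝ => Real.log (1 + (σm ^ 2 / σa ^ 2) * y ^ 2))
      (2 * σm ^ 2 * x / (σa ^ 2 + σm ^ 2 * x ^ 2)) x := by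
    have h := ((hsq.const_mul (σm ^ 2 / σa ^ 2)).const_add 1).log hL
    refine h.congr_deriv ?_
    rw [div_eq_div_iff hL hD]
    field_simp
  have h2 : HasDerivAt (fun y : ℝ => Real.arctan (σm * y / σa))
      (σa * σm / (σa ^ 2 + σm ^ 2 * x ^ 2)) x := by
    have h := (((hasDerivAt_id x).const_mul σm).div_const σa).arctan
    refine h.congr_deriv ?_
    simp only [id]
    rw [div_mul_eq_mul_div, div_eq_div_iff hA hD]
    field_simp
  have h3 := (((h1.const_mul ((a - θ - ν * σm ^ 2 + σa ^ 2 / σm ^ 2) / σm ^ 2)).add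
    (h2.const_mul (2 * θ * μ / (σa * σm)))).sub (hsq.div_const (σm ^ 2))).exp
  have h4 := (((hsq.const_mul (σm ^ 2)).add_const (σa ^ 2)).const_mul (1 / 2)).mul h3
  refine Eq.trans ?_ (HasDerivAt.deriv (f := fun y : ℝ =>
    (1 / 2) * (σm ^ 2 * y ^ 2 + σa ^ 2) * rho0 ν σa σm a θ μ y) h4).symm
  simp only [rho0, Pi.add_apply, Pi.sub_apply]
  generalize Real.exp _ = E
  field_simp
  ring
end

section
/- Let θ > 0 and σa > 0, and let m_{2p} denote the (2p)-th moment of the symmetric Dawson–Shiino stationary measure. Then for every integer p ≥ 2, m_{2p} = (1−θ)·m_{2p−2} + (1/2)·(2p−3)·σa²·m_{2p−4} (with m₀ = 1). -/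
open MeasureTheory Real

/-- Symmetric Dawson–Shiino unnormalised stationary density ρDS[0]. -/
noncomputable def rhoDS0 (σa θ x : ℝ) : ℝ :=
  Real.exp (-(2 / σa ^ 2) * (x ^ 4 / 4 - (1 - θ) * x ^ 2 / 2))

/-- k-th moment of the symmetric Dawson–Shiino stationary measure. -/
noncomputable def mDS (σa θ : ℝ) (k : ℕ) : ℝ :=
  (∫ x : ℝ, x ^ k * rhoDS0 σa θ x) / ∫ x : ℝ, rhoDS0 σa θ x

theorem rhoDS0_integrable (σa θ : ℝ) (hσa : 0 < σa) (k : ℕ) :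
    Integrable (fun x : ℝ => x ^ k * rhoDS0 σa θ x) := by
  have hc : 0 < 2 / σa ^ 2 := by positivity
  have h := (integrable_rpow_mul_exp_neg_mul_sq hc (s := (k : ℝ))
    (by have : (0 : ℝ) ≤ k := Nat.cast_nonneg k
        linarith)).const_mul (Real.exp (2 / σa ^ 2 * ((1 - θ) / 2 + 1) ^ 2))
  refine h.mono ?_ ?_
  · unfold rhoDS0
    exact Continuous.aestronglyMeasurable (by fun_prop)
  · refine Filter.Eventually.of_forall fun x => ?_
    simp only [Real.rpow_natCast, norm_mul]
    rw [mul_left_comm]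
    refine mul_le_mul_of_nonneg_left ?_ (norm_nonneg _)
    rw [← norm_mul, ← Real.exp_add]
    unfold rhoDS0
    rw [Real.norm_eq_abs, Real.norm_eq_abs, Real.abs_exp, Real.abs_exp, Real.exp_le_exp]
    nlinarith [mul_nonneg hc.le (sq_nonneg (x ^ 2 / 2 - ((1 - θ) / 2 + 1)))]

theorem rhoDS0_hasDerivAt (σa θ x : ℝ) :
    HasDerivAt (rhoDS0 σa θ) (-(2 / σa ^ 2) * (x ^ 3 - (1 - θ) * x) * rhoDS0 σa θ x) x := by
  unfold rhoDS0
  have h := (((((hasDerivAt_pow 4 x).div_const 4).sub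
    (((hasDerivAt_pow 2 x).const_mul (1 - θ)).div_const 2)).const_mul (-(2 / σa ^ 2)))).exp
  refine h.congr_deriv ?_
  change Real.exp (-(2 / σa ^ 2) * (x ^ 4 / 4 - (1 - θ) * x ^ 2 / 2)) * _ = _
  push_cast
  ring

/-- The even moments of the symmetric Dawson–Shiino stationary measure satisfy
the hierarchy m_{2p} = (1−θ)·m_{2p−2} + (1/2)·(2p−3)·σa²·m_{2p−4} for p ≥ 2 (with m₀ = 1). -/
theorem stmt15 (σa θ : ℝ) (hσa : 0 < σa) (hθ : 0 < θ) (p : ℕ) (hp : 2 ≤ p) :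
    mDS σa θ 0 = 1 ∧
    mDS σa θ (2 * p) =
      (1 - θ) * mDS σa θ (2 * p - 2) +
        (1 / 2) * (2 * (p : ℝ) - 3) * σa ^ 2 * mDS σa θ (2 * p - 4) := by
  have hpos : 0 < ∫ x : ℝ, rhoDS0 σa θ x := by
    have h0 := rhoDS0_integrable σa θ hσa 0
    simp only [pow_zero, one_mul] at h0
    exact integral_exp_pos h0
  refine ⟨by simp [mDS, hpos.ne'], ?_⟩
  obtain ⟨q, rfl⟩ := Nat.exists_eq_add_of_le' hp
  have e1 : 2 * (q + 2) - 2 = 2 * q + 2 := by omega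
  have e2 : 2 * (q + 2) - 4 = 2 * q := by omega
  have e3 : 2 * (q + 2) = 2 * q + 4 := by omega
  rw [e1, e2, e3]
  have I := rhoDS0_integrable σa θ hσa
  have hs : σa ≠ 0 := hσa.ne'
  have hI := (((I (2 * q)).const_mul (2 * (q : ℝ) + 1)).sub
    ((I (2 * q + 4)).const_mul (2 / σa ^ 2))).add
    ((I (2 * q + 2)).const_mul (2 / σa ^ 2 * (1 - θ)))
  have key := integral_eq_zero_of_hasDerivAt_of_integrable
    (f := fun x : ℝ => x ^ (2 * q + 1) * rhoDS0 σa θ x) (fun x => by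
      have h := (hasDerivAt_pow (2 * q + 1) x).mul (rhoDS0_hasDerivAt σa θ x)
      refine h.congr_deriv ?_
      show _ = (2 * (q : ℝ) + 1) * (x ^ (2 * q) * rhoDS0 σa θ x)
        - 2 / σa ^ 2 * (x ^ (2 * q + 4) * rhoDS0 σa θ x)
        + 2 / σa ^ 2 * (1 - θ) * (x ^ (2 * q + 2) * rhoDS0 σa θ x)
      simp only [Nat.add_sub_cancel]
      push_cast
      ring) hI (I (2 * q + 1))
  rw [integral_add' (((I (2 * q)).const_mul _).sub ((I (2 * q + 4)).const_mul _))
      ((I (2 * q + 2)).const_mul _),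
    integral_sub' ((I (2 * q)).const_mul _) ((I (2 * q + 4)).const_mul _),
    integral_const_mul, integral_const_mul, integral_const_mul] at key
  unfold mDS
  field_simp at key ⊢
  push_cast
  linarith
end
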